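/- arXiv:1103.3893 — 5 statements merged into one kernel-verified Lean document; each statement's English description precedes it below -/
import Mathlib

section
/- The integral $\int_0^\pi \log^3(2\sin(\theta/2))\,d\theta = -\frac{3}{2}\pi\,\zeta(3)$, where $\zeta$ is the Riemann zeta function. -/
open Real
open Set Filter Topology MeasureTheory

/-- The polar form of `1 - exp (iθ)` makes its logarithm explicit. -/
lemma log_one_sub_exp_mul_I {θ : ℝ} (h0 : 0 < θ) (h1 : θ < 2 * π) :
    Complex.log (1 - Complex.exp (θ * Complex.I)) =
      (Real.log (2 * Real.sin (θ / 2)) : ℝ) + ((θ - π) / 2 : ℝ) * Complex.I := by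
  have hs : 0 < 2 * Real.sin (θ / 2) := by
    have := Real.sin_pos_of_pos_of_lt_pi (x := θ / 2) (by linarith) (by linarith)
    positivity
  have hpolar : 1 - Complex.exp (θ * Complex.I) =
      (2 * Real.sin (θ / 2) : ℝ) * Complex.exp (((θ - π) / 2 : ℝ) * Complex.I) := by
    have h2 : (((θ - π) / 2 : ℝ) : ℂ) * Complex.I =
        (θ / 2 : ℂ) * Complex.I - (π / 2 : ℂ) * Complex.I := by
      push_cast; ring
    have h3 : (θ : ℂ) * Complex.I = (θ / 2 : ℂ) * Complex.I + (θ / 2 : ℂ) * Complex.I := by ring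
    rw [h2, Complex.exp_sub, Complex.exp_pi_div_two_mul_I, h3, Complex.exp_add]
    push_cast
    rw [Complex.sin, neg_mul, Complex.exp_neg]
    have := Complex.exp_ne_zero ((θ / 2 : ℂ) * Complex.I)
    field_simp
  rw [hpolar, Complex.log_ofReal_mul hs (Complex.exp_ne_zero _), Complex.log_exp]
  · simp; linarith
  · simp; linarith

lemma norm_one_sub_mul_exp_sq (r θ : ℝ) :
    ‖1 - (r : ℂ) * Complex.exp (θ * Complex.I)‖ ^ 2 =
      (1 - r) ^ 2 + 4 * r * Real.sin (θ / 2) ^ 2 := by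
  have hc : Real.cos θ = 1 - 2 * Real.sin (θ / 2) ^ 2 := by
    have := Real.cos_two_mul (θ / 2)
    rw [Real.cos_sq', show 2 * (θ / 2) = θ by ring] at this
    linarith
  rw [Complex.sq_norm, Complex.normSq_apply, Complex.exp_mul_I]
  simp [← Complex.ofReal_cos, ← Complex.ofReal_sin]
  have := Real.sin_sq_add_cos_sq θ
  rw [show (1 - r * Real.cos θ) * (1 - r * Real.cos θ) + r * Real.sin θ * (r * Real.sin θ) =
    1 - 2 * r * Real.cos θ + r ^ 2 * (Real.sin θ ^ 2 + Real.cos θ ^ 2) by ring, this, hc]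
  ring

lemma norm_log_one_sub_mul_exp_le {r θ : ℝ} (hr0 : 1 / 4 ≤ r) (hr1 : r ≤ 1)
    (h0 : 0 < θ) (h1 : θ < 2 * π) :
    ‖Complex.log (1 - (r : ℂ) * Complex.exp (θ * Complex.I))‖ ≤
      5 - Real.log (Real.sin (θ / 2)) := by
  have hs : 0 < Real.sin (θ / 2) :=
    Real.sin_pos_of_pos_of_lt_pi (by linarith) (by linarith)
  have hs1 := Real.sin_le_one (θ / 2)
  have hsq := norm_one_sub_mul_exp_sq r θ
  set w := 1 - (r : ℂ) * Complex.exp (θ * Complex.I)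
  have hlow : Real.sin (θ / 2) ≤ ‖w‖ := by
    rw [← pow_le_pow_iff_left₀ hs.le (norm_nonneg _) two_ne_zero, hsq]
    nlinarith [sq_nonneg (1 - r), sq_nonneg (Real.sin (θ / 2))]
  have hupp : ‖w‖ ≤ 2 := by
    refine (norm_sub_le _ _).trans ?_
    rw [norm_mul, Complex.norm_exp_ofReal_mul_I, Complex.norm_real, Real.norm_eq_abs,
      abs_of_nonneg (by linarith)]
    simp; linarith
  have hl1 := Real.log_le_log hs hlow
  have hl2 := Real.log_le_log (hs.trans_le hlow) hupp
  have hl3 := Real.log_nonpos hs.le hs1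
  have hl4 := Real.log_two_lt_d9
  have hre : |(Complex.log w).re| ≤ 1 - Real.log (Real.sin (θ / 2)) := by
    rw [Complex.log_re, abs_le]
    constructor <;> linarith
  have him : |(Complex.log w).im| ≤ 4 := by
    rw [Complex.log_im]
    exact (Complex.abs_arg_le_pi w).trans Real.pi_le_four
  linarith [Complex.norm_le_abs_re_add_abs_im (Complex.log w)]

lemma intervalIntegrable_sub_log_sin_pow_three_zero_pi :
    IntervalIntegrable (fun θ : ℝ ↦ (5 - Real.log (Real.sin (θ / 2))) ^ 3) volume 0 π := by
  have hrpow : IntervalIntegrable (fun θ : ℝ ↦ 1331 * π ^ (1 / 2 : ℝ) * θ ^ (-(1 / 2) : ℝ))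
      volume 0 π :=
    (intervalIntegral.intervalIntegrable_rpow' (by norm_num)).const_mul _
  refine hrpow.mono_fun' (Measurable.aestronglyMeasurable (by fun_prop)) ?_
  rw [uIoc_of_le Real.pi_pos.le]
  refine (ae_restrict_iff' measurableSet_Ioc).2 (Eventually.of_forall fun θ hθ ↦ ?_)
  obtain ⟨h0, h1⟩ := hθ
  have hv : 1 ≤ π / θ := by rwa [one_le_div h0]
  have hs : (π / θ)⁻¹ ≤ Real.sin (θ / 2) := by
    have := Real.mul_le_sin (x := θ / 2) (by linarith) (by linarith)
    convert this using 1
    field_simp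
  have hlog : -Real.log (Real.sin (θ / 2)) ≤ 6 * (π / θ) ^ (1 / 6 : ℝ) := by
    have h2 := Real.log_le_log (by positivity) hs
    rw [Real.log_inv] at h2
    have h3 := Real.log_le_rpow_div (x := π / θ) (by linarith) (show (0 : ℝ) < 1 / 6 by norm_num)
    linarith
  have hpow : 1 ≤ (π / θ) ^ (1 / 6 : ℝ) := Real.one_le_rpow hv (by norm_num)
  have hB : 0 ≤ 5 - Real.log (Real.sin (θ / 2)) := by
    have := Real.log_nonpos ((by positivity : 0 ≤ (π / θ)⁻¹).trans hs) (Real.sin_le_one _)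
    linarith
  beta_reduce
  rw [Real.norm_of_nonneg (by positivity)]
  calc (5 - Real.log (Real.sin (θ / 2))) ^ 3 ≤ (11 * (π / θ) ^ (1 / 6 : ℝ)) ^ 3 := by
        gcongr; linarith
    _ = 1331 * (π / θ) ^ (1 / 2 : ℝ) := by
        rw [mul_pow, ← Real.rpow_mul_natCast (by positivity)]
        norm_num
    _ = _ := by
        rw [Real.div_rpow Real.pi_pos.le h0.le, Real.rpow_neg h0.le]
        ring

lemma intervalIntegrable_sub_log_sin_pow_three :
    IntervalIntegrable (fun θ : ℝ ↦ (5 - Real.log (Real.sin (θ / 2))) ^ 3) volume 0 (2 * π) := by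
  have h := intervalIntegrable_sub_log_sin_pow_three_zero_pi
  refine h.trans ?_
  have h2 := (h.comp_sub_left (2 * π)).symm
  rw [show 2 * π - π = π by ring, sub_zero] at h2
  convert h2 using 5 with θ
  rw [show (2 * π - θ) / 2 = π - θ / 2 by ring, Real.sin_pi_sub]

lemma integral_log_one_sub_mul_exp_pow_three {r : ℝ} (hr0 : 0 < r) (hr1 : r < 1) :
    ∫ θ in (0 : ℝ)..2 * π, Complex.log (1 - (r : ℂ) * Complex.exp (θ * Complex.I)) ^ 3 = 0 := by
  have hd : DifferentiableOn ℂ (fun z : ℂ ↦ Complex.log (1 - z) ^ 3)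
      (closure (Metric.ball 0 |r|)) := by
    rw [closure_ball _ (by positivity)]
    intro z hz
    have hz' : ‖-z‖ < 1 := by
      rw [norm_neg]
      rw [mem_closedBall_zero_iff, abs_of_pos hr0] at hz
      linarith
    have hsl := Complex.mem_slitPlane_of_norm_lt_one hz'
    rw [← sub_eq_add_neg] at hsl
    exact (((differentiableAt_id.const_sub 1).clog hsl).pow 3).differentiableWithinAt
  have h := hd.diffContOnCl.circleAverage
  rw [Real.circleAverage_def] at h
  simpa [circleMap, Real.pi_ne_zero] using h

lemma integral_sub_pi_sq_mul_exp {n : ℕ} (hn : n ≠ 0) :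
    ∫ θ in (0 : ℝ)..2 * π, ((θ : ℂ) - π) ^ 2 * Complex.exp (n * (θ * Complex.I)) =
      4 * π / (n : ℂ) ^ 2 := by
  have hn' : (n : ℂ) ≠ 0 := Nat.cast_ne_zero.2 hn
  set c : ℂ := n * Complex.I with hc
  have hc0 : c ≠ 0 := mul_ne_zero hn' Complex.I_ne_zero
  have hd (θ : ℝ) : HasDerivAt (fun θ : ℝ ↦ Complex.exp (c * θ) *
      (((θ : ℂ) - π) ^ 2 / c - 2 * ((θ : ℂ) - π) / c ^ 2 + 2 / c ^ 3))
      (((θ : ℂ) - π) ^ 2 * Complex.exp (n * (θ * Complex.I))) θ := by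
    have hid : HasDerivAt (fun θ : ℝ ↦ (θ : ℂ)) 1 θ := Complex.ofRealCLM.hasDerivAt
    have hsub := hid.sub_const (π : ℂ)
    have h := (hid.const_mul c).cexp.mul
      ((((hsub.pow 2).div_const c).sub ((hsub.const_mul 2).div_const (c ^ 2))).add_const
        (2 / c ^ 3))
    refine h.congr_deriv ?_
    rw [show (n : ℂ) * (θ * Complex.I) = c * θ by rw [hc]; ring]
    simp
    field_simp
    ring
  rw [intervalIntegral.integral_eq_sub_of_hasDerivAt (fun θ _ ↦ hd θ)
    (Continuous.intervalIntegrable (by fun_prop) _ _)]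
  have hexp : Complex.exp (c * ((2 * π : ℝ) : ℂ)) = 1 := by
    rw [show c * ((2 * π : ℝ) : ℂ) = n * (2 * π * Complex.I) by rw [hc]; push_cast; ring]
    exact Complex.exp_nat_mul_two_pi_mul_I n
  rw [hexp]
  have hc2 : c ^ 2 = -(n : ℂ) ^ 2 := by rw [hc, mul_pow, Complex.I_sq]; ring
  simp only [hc2]
  push_cast
  simp
  field_simp
  ring

lemma integral_log_one_sub_mul_exp_mul_sub_pi_sq {r : ℝ} (hr0 : 0 < r) (hr1 : r < 1) :
    ∫ θ in (0 : ℝ)..2 * π,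
        Complex.log (1 - (r : ℂ) * Complex.exp (θ * Complex.I)) * ((θ : ℂ) - π) ^ 2 =
      -(4 * π) * ∑' n : ℕ, (r : ℂ) ^ n * (1 / (n : ℂ) ^ 3) := by
  have hbound : Summable fun n : ℕ ↦ r ^ n * π ^ 2 :=
    (summable_geometric_of_lt_one hr0.le hr1).mul_right _
  have h := intervalIntegral.hasSum_integral_of_dominated_convergence (μ := volume)
    (a := 0) (b := 2 * π)
    (F := fun (n : ℕ) (θ : ℝ) ↦
      ((r : ℂ) * Complex.exp (θ * Complex.I)) ^ n / n * ((θ : ℂ) - π) ^ 2)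
    (f := fun θ : ℝ ↦
      -Complex.log (1 - (r : ℂ) * Complex.exp (θ * Complex.I)) * ((θ : ℂ) - π) ^ 2)
    (fun n _ ↦ r ^ n * π ^ 2)
    (fun n ↦ Continuous.aestronglyMeasurable (by fun_prop))
    (fun n ↦ Eventually.of_forall fun θ hθ ↦ ?_)
    (Eventually.of_forall fun _ _ ↦ hbound) intervalIntegrable_const
    (Eventually.of_forall fun θ _ ↦ ?_)
  · have hterm (n : ℕ) : ∫ θ in (0 : ℝ)..2 * π,
        ((r : ℂ) * Complex.exp (θ * Complex.I)) ^ n / n * ((θ : ℂ) - π) ^ 2 =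
        4 * π * ((r : ℂ) ^ n * (1 / (n : ℂ) ^ 3)) := by
      rcases eq_or_ne n 0 with rfl | hn
      · simp
      · have hn' : (n : ℂ) ≠ 0 := Nat.cast_ne_zero.2 hn
        calc _ = ∫ θ in (0 : ℝ)..2 * π, (r : ℂ) ^ n / n *
              (((θ : ℂ) - π) ^ 2 * Complex.exp (n * (θ * Complex.I))) := by
              congr 1; ext θ
              rw [mul_pow, ← Complex.exp_nat_mul]
              ring
          _ = _ := by
              rw [intervalIntegral.integral_const_mul, integral_sub_pi_sq_mul_exp hn]
              field_simp
    simp only [hterm, neg_mul] at h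
    rw [intervalIntegral.integral_neg] at h
    have h' := h.tsum_eq
    rw [tsum_mul_left] at h'
    rw [neg_mul, h', neg_neg]
  · rw [uIoc_of_le (by positivity)] at hθ
    have hdist : ‖(θ : ℂ) - π‖ ≤ π := by
      rw [← Complex.ofReal_sub, Complex.norm_real, Real.norm_eq_abs, abs_le]
      constructor <;> linarith [hθ.1, hθ.2]
    have hpow : ‖((r : ℂ) * Complex.exp (θ * Complex.I)) ^ n / n‖ ≤ r ^ n := by
      rw [norm_div, norm_pow, norm_mul, Complex.norm_exp_ofReal_mul_I, Complex.norm_real,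
        Real.norm_of_nonneg hr0.le, mul_one, Complex.norm_natCast]
      rcases Nat.eq_zero_or_pos n with rfl | hn
      · simp
      · exact div_le_self (by positivity) (by exact_mod_cast hn)
    rw [norm_mul, norm_pow]
    gcongr
  · refine (Complex.hasSum_taylorSeries_neg_log ?_).mul_right _
    rw [norm_mul, Complex.norm_exp_ofReal_mul_I, Complex.norm_real, Real.norm_of_nonneg hr0.le]
    linarith

lemma tendsto_tsum_pow_mul_one_div_cube :
    Tendsto (fun r : ℝ ↦ ∑' n : ℕ, (r : ℂ) ^ n * (1 / (n : ℂ) ^ 3)) (𝓝[<] 1)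
      (𝓝 (riemannZeta 3)) := by
  have hz : riemannZeta 3 = ∑' n : ℕ, 1 / (n : ℂ) ^ 3 := by
    exact_mod_cast zeta_nat_eq_tsum_of_gt_one (k := 3) (by norm_num)
  rw [hz]
  refine tendsto_tsum_of_dominated_convergence (bound := fun n : ℕ ↦ 1 / (n : ℝ) ^ 3)
    (Real.summable_one_div_nat_pow.2 (by norm_num)) (fun n ↦ ?_) ?_
  · have : Continuous fun r : ℝ ↦ (r : ℂ) ^ n * (1 / (n : ℂ) ^ 3) := by fun_prop
    simpa using (this.tendsto 1).mono_left nhdsWithin_le_nhds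
  · filter_upwards [Ioo_mem_nhdsLT (show (0 : ℝ) < 1 by norm_num)] with r hr n
    rw [norm_mul, norm_pow, Complex.norm_real, Real.norm_of_nonneg hr.1.le]
    simpa using mul_le_of_le_one_left (by positivity : 0 ≤ ((n : ℝ) ^ 3)⁻¹)
      (pow_le_one₀ hr.1.le hr.2.le)

/-- A combination whose integral over the circle of radius `r < 1` is computed by the mean value
property and termwise integration, and whose real part on the unit circle is
`log (2 * sin (θ / 2)) ^ 3`. -/
noncomputable def logCubeKernel (r θ : ℝ) : ℂ :=
  Complex.log (1 - (r : ℂ) * Complex.exp (θ * Complex.I)) ^ 3 +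
    3 / 4 * (Complex.log (1 - (r : ℂ) * Complex.exp (θ * Complex.I)) * ((θ : ℂ) - π) ^ 2)

lemma measurable_logCubeKernel (r : ℝ) : Measurable (logCubeKernel r) := by
  unfold logCubeKernel
  have : Measurable fun θ : ℝ ↦ Complex.log (1 - (r : ℂ) * Complex.exp (θ * Complex.I)) :=
    Complex.measurable_log.comp (Continuous.measurable (by fun_prop))
  fun_prop

lemma norm_logCubeKernel_le {r θ : ℝ} (hr0 : 1 / 4 ≤ r) (hr1 : r ≤ 1)
    (h0 : 0 < θ) (h1 : θ < 2 * π) :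
    ‖logCubeKernel r θ‖ ≤ 2 * (5 - Real.log (Real.sin (θ / 2))) ^ 3 := by
  have hl := norm_log_one_sub_mul_exp_le hr0 hr1 h0 h1
  have hB : 5 ≤ 5 - Real.log (Real.sin (θ / 2)) := by
    have := Real.log_nonpos (Real.sin_nonneg_of_nonneg_of_le_pi (x := θ / 2)
      (by linarith) (by linarith)) (Real.sin_le_one _)
    linarith
  set B := 5 - Real.log (Real.sin (θ / 2))
  have hdist : ‖(θ : ℂ) - π‖ ≤ B := by
    rw [← Complex.ofReal_sub, Complex.norm_real, Real.norm_eq_abs, abs_le]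
    constructor <;> linarith [Real.pi_le_four]
  calc ‖logCubeKernel r θ‖ ≤ B ^ 3 + 3 / 4 * (B * B ^ 2) := by
        refine (norm_add_le _ _).trans ?_
        rw [norm_pow, norm_mul, norm_mul, norm_pow]
        norm_num
        gcongr
    _ ≤ 2 * B ^ 3 := by
        have : 0 ≤ B ^ 3 := by positivity
        linarith

lemma re_logCubeKernel_one {θ : ℝ} (h0 : 0 < θ) (h1 : θ < 2 * π) :
    (logCubeKernel 1 θ).re = Real.log (2 * Real.sin (θ / 2)) ^ 3 := by
  unfold logCubeKernel
  rw [Complex.ofReal_one, one_mul, log_one_sub_exp_mul_I h0 h1]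
  generalize Real.log (2 * Real.sin (θ / 2)) = L
  rw [show ((L : ℂ) + ((θ - π) / 2 : ℝ) * Complex.I) ^ 3 +
      3 / 4 * (((L : ℂ) + ((θ - π) / 2 : ℝ) * Complex.I) * ((θ : ℂ) - π) ^ 2) =
      ((L ^ 3 : ℝ) : ℂ) + ((3 * L ^ 2 * ((θ - π) / 2) + 2 * ((θ - π) / 2) ^ 3 : ℝ) : ℂ) *
        Complex.I by
    push_cast
    linear_combination (3 * L * ((θ - π) / 2 : ℂ) ^ 2 +
      ((θ - π) / 2 : ℂ) ^ 3 * Complex.I) * Complex.I_sq]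
  rw [Complex.add_re, Complex.re_ofReal_mul, Complex.I_re, mul_zero, add_zero, Complex.ofReal_re]

lemma ae_lt_two_pi_of_mem_uIoc :
    ∀ᵐ θ : ℝ, θ ∈ uIoc 0 (2 * π) → 0 < θ ∧ θ < 2 * π := by
  have hne : ∀ᵐ θ : ℝ, θ ≠ 2 * π := by simp [ae_iff]
  filter_upwards [hne] with θ hθ hmem
  rw [uIoc_of_le (by positivity)] at hmem
  exact ⟨hmem.1, lt_of_le_of_ne hmem.2 hθ⟩

lemma intervalIntegrable_logCubeKernel {r : ℝ} (hr0 : 1 / 4 ≤ r) (hr1 : r ≤ 1) :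
    IntervalIntegrable (logCubeKernel r) volume 0 (2 * π) := by
  refine (intervalIntegrable_sub_log_sin_pow_three.const_mul 2).mono_fun'
    (measurable_logCubeKernel r).aestronglyMeasurable
    ((ae_restrict_iff' measurableSet_uIoc).2 ?_)
  filter_upwards [ae_lt_two_pi_of_mem_uIoc] with θ h hθ
  exact norm_logCubeKernel_le hr0 hr1 (h hθ).1 (h hθ).2

lemma integral_logCubeKernel {r : ℝ} (hr0 : 0 < r) (hr1 : r < 1) :
    ∫ θ in (0 : ℝ)..2 * π, logCubeKernel r θ =
      -(3 * π) * ∑' n : ℕ, (r : ℂ) ^ n * (1 / (n : ℂ) ^ 3) := by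
  have hcont : Continuous fun θ : ℝ ↦
      Complex.log (1 - (r : ℂ) * Complex.exp (θ * Complex.I)) := by
    refine Continuous.clog (by fun_prop) fun θ ↦ ?_
    rw [sub_eq_add_neg]
    apply Complex.mem_slitPlane_of_norm_lt_one
    rw [norm_neg, norm_mul, Complex.norm_exp_ofReal_mul_I, Complex.norm_real,
      Real.norm_of_nonneg hr0.le]
    linarith
  unfold logCubeKernel
  rw [intervalIntegral.integral_add (Continuous.intervalIntegrable (by fun_prop) _ _)
    (Continuous.intervalIntegrable (by fun_prop) _ _), intervalIntegral.integral_const_mul,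
    integral_log_one_sub_mul_exp_pow_three hr0 hr1,
    integral_log_one_sub_mul_exp_mul_sub_pi_sq hr0 hr1]
  ring

lemma integral_logCubeKernel_one :
    ∫ θ in (0 : ℝ)..2 * π, logCubeKernel 1 θ = -(3 * π) * riemannZeta 3 := by
  have hlim : Tendsto (fun r ↦ ∫ θ in (0 : ℝ)..2 * π, logCubeKernel r θ) (𝓝[<] 1)
      (𝓝 (∫ θ in (0 : ℝ)..2 * π, logCubeKernel 1 θ)) := by
    refine intervalIntegral.tendsto_integral_filter_of_dominated_convergence
      (fun θ ↦ 2 * (5 - Real.log (Real.sin (θ / 2))) ^ 3)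
      (Eventually.of_forall fun r ↦ (measurable_logCubeKernel r).aestronglyMeasurable) ?_
      (intervalIntegrable_sub_log_sin_pow_three.const_mul 2) ?_
    · filter_upwards [Ioo_mem_nhdsLT (show (1 / 4 : ℝ) < 1 by norm_num)] with r hr
      filter_upwards [ae_lt_two_pi_of_mem_uIoc] with θ h hθ
      exact norm_logCubeKernel_le hr.1.le hr.2.le (h hθ).1 (h hθ).2
    · filter_upwards [ae_lt_two_pi_of_mem_uIoc] with θ h hθ
      obtain ⟨h0, h1⟩ := h hθ
      have hsl : 1 - ((1 : ℝ) : ℂ) * Complex.exp (θ * Complex.I) ∈ Complex.slitPlane := by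
        left
        have hs := Real.sin_pos_of_pos_of_lt_pi (x := θ / 2) (by linarith) (by linarith)
        have hc := Real.cos_two_mul (θ / 2)
        rw [Real.cos_sq', show 2 * (θ / 2) = θ by ring] at hc
        simp [Complex.exp_ofReal_mul_I_re]
        nlinarith
      have hlog : ContinuousAt (fun r : ℝ ↦
          Complex.log (1 - (r : ℂ) * Complex.exp (θ * Complex.I))) 1 :=
        ContinuousAt.clog (by fun_prop) hsl
      have hker : ContinuousAt (fun r : ℝ ↦ logCubeKernel r θ) 1 := by
        unfold logCubeKernel
        fun_prop
      exact hker.tendsto.mono_left nhdsWithin_le_nhds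
  refine tendsto_nhds_unique hlim
    ((tendsto_tsum_pow_mul_one_div_cube.const_mul (-(3 * π : ℂ))).congr' ?_)
  filter_upwards [Ioo_mem_nhdsLT (show (0 : ℝ) < 1 by norm_num)] with r hr
  exact (integral_logCubeKernel hr.1 hr.2).symm

lemma intervalIntegrable_log_two_mul_sin_pow_three :
    IntervalIntegrable (fun θ : ℝ ↦ Real.log (2 * Real.sin (θ / 2)) ^ 3) volume 0 (2 * π) := by
  have h := intervalIntegrable_logCubeKernel (r := 1) (by norm_num) le_rfl
  refine h.norm.mono_fun' (Measurable.aestronglyMeasurable (by fun_prop))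
    ((ae_restrict_iff' measurableSet_uIoc).2 ?_)
  filter_upwards [ae_lt_two_pi_of_mem_uIoc] with θ hθ hmem
  rw [← re_logCubeKernel_one (hθ hmem).1 (hθ hmem).2]
  exact Complex.abs_re_le_norm _

lemma integral_log_two_mul_sin_pow_three_eq_re :
    ∫ θ in (0 : ℝ)..2 * π, Real.log (2 * Real.sin (θ / 2)) ^ 3 =
      (-(3 * π) * riemannZeta 3).re := by
  rw [← integral_logCubeKernel_one]
  refine Eq.trans (intervalIntegral.integral_congr_ae ?_)
    (intervalIntegral.intervalIntegral_re
      (intervalIntegrable_logCubeKernel (r := 1) (by norm_num) le_rfl))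
  filter_upwards [ae_lt_two_pi_of_mem_uIoc] with θ hθ hmem
  exact (re_logCubeKernel_one (hθ hmem).1 (hθ hmem).2).symm

lemma integral_log_two_mul_sin_pow_three_two_pi :
    ∫ θ in (0 : ℝ)..2 * π, Real.log (2 * Real.sin (θ / 2)) ^ 3 =
      2 * ∫ θ in (0 : ℝ)..π, Real.log (2 * Real.sin (θ / 2)) ^ 3 := by
  have hint := intervalIntegrable_log_two_mul_sin_pow_three
  have hpi : π ∈ uIcc 0 (2 * π) := by
    rw [uIcc_of_le (by positivity)]
    constructor <;> linarith [Real.pi_pos]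
  rw [← intervalIntegral.integral_add_adjacent_intervals
    (hint.mono_set (uIcc_subset_uIcc_left hpi)) (hint.mono_set (uIcc_subset_uIcc_right hpi))]
  have hsymm := intervalIntegral.integral_comp_sub_left (a := 0) (b := π)
    (fun θ : ℝ ↦ Real.log (2 * Real.sin (θ / 2)) ^ 3) (2 * π)
  simp only [show ∀ θ : ℝ, (2 * π - θ) / 2 = π - θ / 2 from fun θ ↦ by ring,
    Real.sin_pi_sub] at hsymm
  rw [show 2 * π - π = π by ring, sub_zero] at hsymm
  rw [← hsymm]
  ring

lemma ofReal_re_riemannZeta_three : (((riemannZeta 3).re : ℝ) : ℂ) = riemannZeta 3 := by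
  have hz : riemannZeta 3 = ((∑' n : ℕ, 1 / (n : ℝ) ^ 3 : ℝ) : ℂ) := by
    push_cast
    exact_mod_cast zeta_nat_eq_tsum_of_gt_one (k := 3) (by norm_num)
  rw [hz, Complex.ofReal_re]

theorem ls4_pi :
    ((∫ θ in (0:ℝ)..π, (Real.log (2 * Real.sin (θ/2)))^3 : ℝ) : ℂ) =
      -(3/2) * (π : ℂ) * riemannZeta 3 := by
  have h := integral_log_two_mul_sin_pow_three_two_pi.symm.trans
    integral_log_two_mul_sin_pow_three_eq_re
  have hre : (-(3 * π) * riemannZeta 3 : ℂ).re = -(3 * π) * (riemannZeta 3).re := by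
    rw [← ofReal_re_riemannZeta_three]
    norm_cast
  rw [hre] at h
  have h2 : (∫ θ in (0:ℝ)..π, (Real.log (2 * Real.sin (θ/2)))^3) =
      -(3 / 2) * π * (riemannZeta 3).re := by linarith
  rw [h2]
  push_cast
  rw [ofReal_re_riemannZeta_three]
end

section
/- The integral $\int_0^\pi \log^4(2\sin(\theta/2))\,d\theta = \frac{19}{240}\pi^5$. -/
open Real

theorem one_sub_mem_slitPlane {z : ℂ} (hz : ‖z‖ < 1) : 1 - z ∈ Complex.slitPlane := by
  have := Complex.mem_slitPlane_of_norm_lt_one (z := -z) (by simpa using hz)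
  rwa [← sub_eq_add_neg] at this

/-- `log (1 - r w)` as an integral along the radius through `w`. -/
theorem log_one_sub_eq_neg_integral {w : ℂ} (hw : ‖w‖ = 1) {r : ℝ} (hr : 0 ≤ r) (hr1 : r < 1) :
    Complex.log (1 - r * w) = -∫ s in (0:ℝ)..r, w / (1 - s * w) := by
  have key : ∀ s ∈ Set.uIcc 0 r, 1 - (s : ℂ) * w ∈ Complex.slitPlane := fun s hs ↦ by
    rw [Set.uIcc_of_le hr] at hs
    refine one_sub_mem_slitPlane ?_
    rw [norm_mul, hw, Complex.norm_real, Real.norm_of_nonneg hs.1]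
    linarith [hs.2]
  have hd : ∀ s ∈ Set.uIcc 0 r, HasDerivAt (fun s : ℝ ↦ Complex.log (1 - (s : ℂ) * w))
      (-(w / (1 - (s : ℂ) * w))) s := fun s hs ↦ by
    have h1 : HasDerivAt (fun s : ℝ ↦ 1 - (s : ℂ) * w) (-w) s := by
      simpa using ((Complex.ofRealCLM.hasDerivAt (x := s)).mul_const w).const_sub 1
    simpa [neg_div] using h1.clog_real (key s hs)
  have hc : ContinuousOn (fun s : ℝ ↦ w / (1 - (s : ℂ) * w)) (Set.uIcc 0 r) :=
    continuousOn_const.div (by fun_prop) fun s hs ↦ Complex.slitPlane_ne_zero (key s hs)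
  have := intervalIntegral.integral_eq_sub_of_hasDerivAt hd hc.neg.intervalIntegrable
  rw [← intervalIntegral.integral_neg, this]
  simp

theorem circleMap_one_sub_ne_zero {θ s : ℝ} (hs : 0 ≤ s) (hs1 : s < 1) :
    circleMap 0 1 θ - (s : ℂ) ≠ 0 := fun h ↦ by
  have h4 := congrArg norm (sub_eq_zero.1 h)
  rw [Complex.norm_real, Real.norm_of_nonneg hs] at h4
  simp at h4
  linarith

/-- Cauchy's integral formula for `f z / z` on the circle of radius `r`, at the point `r * s`. -/
theorem integral_div_circleMap_sub {f : ℂ → ℂ} (hf : DifferentiableOn ℂ f (Metric.ball 0 1))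
    (hf0 : f 0 = 0) {r s : ℝ} (hr : 0 < r) (hr1 : r < 1) (hs : 0 ≤ s) (hs1 : s < 1) :
    ∫ θ in (0:ℝ)..2 * π, f (circleMap 0 r θ) / (circleMap 0 1 θ - s) =
      2 * π * r * dslope f 0 (r * s : ℝ) := by
  have hd : DifferentiableOn ℂ (dslope f 0) (Metric.closedBall 0 r) :=
    ((Complex.differentiableOn_dslope (Metric.ball_mem_nhds 0 one_pos)).2 hf).mono
      (Metric.closedBall_subset_ball hr1)
  have hmem : ((r * s : ℝ) : ℂ) ∈ Metric.ball (0:ℂ) r := by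
    rw [mem_ball_zero_iff, Complex.norm_real, Real.norm_of_nonneg (by positivity)]
    nlinarith
  have hC := hd.circleIntegral_sub_inv_smul hmem
  rw [circleIntegral] at hC
  have hI : (Complex.I : ℂ) ≠ 0 := Complex.I_ne_zero
  have hr' : (r : ℂ) ≠ 0 := by exact_mod_cast hr.ne'
  have : ∀ θ : ℝ, f (circleMap 0 r θ) / (circleMap 0 1 θ - s) =
      (r / Complex.I) * (deriv (circleMap 0 r) θ •
        ((circleMap 0 r θ - (r * s : ℝ))⁻¹ • dslope f 0 (circleMap 0 r θ))) := fun θ ↦ by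
    have h0 : circleMap 0 r θ ≠ 0 := circleMap_ne_center hr.ne'
    have h1 : circleMap 0 r θ = r * circleMap 0 1 θ := by simp [circleMap]
    have h2 : circleMap 0 r θ - (r * s : ℝ) = r * (circleMap 0 1 θ - s) := by
      rw [h1]; push_cast; ring
    rw [dslope_of_ne _ h0, slope_def_field, hf0, h2, deriv_circleMap, mul_inv]
    simp only [smul_eq_mul, sub_zero]
    field_simp
  simp_rw [this]
  rw [intervalIntegral.integral_const_mul, hC, smul_eq_mul]
  field_simp

/-- Pairing a holomorphic function with the conjugate of `log (1 - z)` on a circle gives a radial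
integral of `f t / t`. -/
theorem integral_mul_conj_log_one_sub {f : ℂ → ℂ} (hf : DifferentiableOn ℂ f (Metric.ball 0 1))
    (hf0 : f 0 = 0) {r : ℝ} (hr : 0 < r) (hr1 : r < 1) :
    ∫ θ in (0:ℝ)..2 * π, f (circleMap 0 r θ) *
        (starRingEnd ℂ) (Complex.log (1 - circleMap 0 r θ)) =
      -(2 * π * ∫ t in (0:ℝ)..r ^ 2, dslope f 0 (t : ℂ)) := by
  have hlog : ∀ θ : ℝ, f (circleMap 0 r θ) *
      (starRingEnd ℂ) (Complex.log (1 - circleMap 0 r θ)) =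
      -∫ s in (0:ℝ)..r, f (circleMap 0 r θ) / (circleMap 0 1 θ - s) := fun θ ↦ by
    have hn : ‖circleMap 0 r θ‖ < 1 := by simpa [abs_of_pos hr] using hr1
    have h1 : circleMap 0 r θ = r * circleMap 0 1 θ := by simp [circleMap]
    have hc : (circleMap 0 1 θ) ≠ 0 := circleMap_ne_center one_ne_zero
    have hconj : (starRingEnd ℂ) (circleMap 0 1 θ) = (circleMap 0 1 θ)⁻¹ := by
      rw [Complex.inv_eq_conj (by simp)]
    rw [← Complex.log_conj _ (Complex.slitPlane_arg_ne_pi (one_sub_mem_slitPlane hn)), map_sub,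
      map_one, h1, map_mul, Complex.conj_ofReal, hconj,
      log_one_sub_eq_neg_integral (by simp) hr.le hr1, mul_neg,
      ← intervalIntegral.integral_const_mul]
    congr 1
    refine intervalIntegral.integral_congr fun s hs ↦ ?_
    rw [Set.uIcc_of_le hr.le] at hs
    have h3 := circleMap_one_sub_ne_zero (θ := θ) hs.1 (hs.2.trans_lt hr1)
    have h4 : 1 - (s : ℂ) * (circleMap 0 1 θ)⁻¹ = (circleMap 0 1 θ - s) * (circleMap 0 1 θ)⁻¹ := by
      field_simp
    rw [h4]
    field_simp
  simp_rw [hlog]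
  rw [intervalIntegral.integral_neg]
  congr 1
  have hne : ∀ p ∈ Set.Icc (0:ℝ) (2 * π) ×ˢ Set.Icc 0 r, circleMap 0 1 p.1 - (p.2 : ℂ) ≠ 0 :=
    fun p hp ↦ circleMap_one_sub_ne_zero hp.2.1 (hp.2.2.trans_lt hr1)
  have hfc : Continuous fun θ ↦ f (circleMap 0 r θ) :=
    hf.continuousOn.comp_continuous (continuous_circleMap 0 r) fun θ ↦ by
      simpa [abs_of_pos hr] using hr1
  have hcont : ContinuousOn (fun p : ℝ × ℝ ↦ f (circleMap 0 r p.1) / (circleMap 0 1 p.1 - p.2))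
      (Set.Icc 0 (2 * π) ×ˢ Set.Icc 0 r) :=
    (hfc.comp continuous_fst).continuousOn.div (Continuous.continuousOn (by fun_prop)) hne
  have hint : MeasureTheory.Integrable
      (fun p : ℝ × ℝ ↦ f (circleMap 0 r p.1) / (circleMap 0 1 p.1 - p.2))
      ((MeasureTheory.volume.restrict (Set.Ioc 0 (2 * π))).prod
        (MeasureTheory.volume.restrict (Set.Ioc 0 r))) := by
    rw [MeasureTheory.Measure.prod_restrict]
    exact (hcont.integrableOn_compact (isCompact_Icc.prod isCompact_Icc)).mono_set
      (Set.prod_mono Set.Ioc_subset_Icc_self Set.Ioc_subset_Icc_self)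
  simp only [intervalIntegral.integral_of_le hr.le, intervalIntegral.integral_of_le two_pi_pos.le]
  rw [MeasureTheory.integral_integral_swap hint]
  simp only [← intervalIntegral.integral_of_le hr.le,
    ← intervalIntegral.integral_of_le two_pi_pos.le]
  have hinner : ∀ s ∈ Set.uIcc 0 r,
      ∫ θ in (0:ℝ)..2 * π, f (circleMap 0 r θ) / (circleMap 0 1 θ - s) =
        2 * π * r * dslope f 0 (r * s : ℝ) := fun s hs ↦ by
    rw [Set.uIcc_of_le hr.le] at hs
    exact integral_div_circleMap_sub hf hf0 hr hr1 hs.1 (hs.2.trans_lt hr1)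
  rw [intervalIntegral.integral_congr hinner, intervalIntegral.integral_const_mul,
    intervalIntegral.integral_comp_mul_left (fun t : ℝ ↦ dslope f 0 (t : ℂ)) hr.ne',
    Complex.real_smul]
  have hr' : (r : ℂ) ≠ 0 := by exact_mod_cast hr.ne'
  rw [mul_zero, ← sq]
  push_cast
  field_simp

theorem differentiableOn_log_one_sub_pow (n : ℕ) :
    DifferentiableOn ℂ (fun z ↦ Complex.log (1 - z) ^ n) (Metric.ball 0 1) :=
  (DifferentiableOn.clog (by fun_prop) fun _ hz ↦
    one_sub_mem_slitPlane (mem_ball_zero_iff.1 hz)).pow n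

theorem integral_pow_three_mul_exp_neg_mul_Ioi {a : ℝ} (ha : 0 < a) :
    ∫ x in Set.Ioi (0:ℝ), x ^ 3 * rexp (-(a * x)) = 6 * (1 / a ^ 4) := by
  have h := Real.integral_rpow_mul_exp_neg_mul_Ioi (a := 4) (by norm_num) ha
  have hG : Real.Gamma 4 = 6 := by
    rw [show (4 : ℝ) = (3 : ℕ) + 1 by norm_num, Real.Gamma_nat_eq_factorial]
    norm_num [Nat.factorial]
  rw [hG] at h
  have h4 : (1 / a) ^ (4 : ℝ) = 1 / a ^ 4 := by
    rw [show (4 : ℝ) = (4 : ℕ) by norm_num, Real.rpow_natCast, one_div_pow]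
  rw [h4, mul_comm] at h
  rw [← h]
  refine MeasureTheory.integral_congr_ae (Filter.Eventually.of_forall fun x ↦ ?_)
  simp only
  rw [show (4 : ℝ) - 1 = (3 : ℕ) by norm_num, Real.rpow_natCast]

theorem hasSum_exp_neg_natCast_succ_mul {x : ℝ} (hx : 0 < x) :
    HasSum (fun n : ℕ ↦ rexp (-((n + 1) * x))) (rexp (-x) / (1 - rexp (-x))) := by
  have h := (hasSum_geometric_of_lt_one (exp_pos (-x)).le
    (by simpa using hx)).mul_left (rexp (-x))
  rw [← div_eq_mul_inv] at h
  have he : ∀ n : ℕ, rexp (-((n + 1) * x)) = rexp (-x) * rexp (-x) ^ n := fun n ↦ by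
    rw [← Real.exp_nat_mul, ← Real.exp_add]
    ring_nf
  simpa only [he] using h

/-- The Bose–Einstein integral `∫ x ^ 3 / (exp x - 1) = 6 ζ(4)`. -/
theorem integral_bose_einstein_three :
    ∫ x in Set.Ioi (0:ℝ), x ^ 3 * (rexp (-x) / (1 - rexp (-x))) = π ^ 4 / 15 := by
  have hI : ∀ n : ℕ, ∫ x in Set.Ioi (0:ℝ), x ^ 3 * rexp (-((n + 1) * x)) =
      6 * (1 / ((n + 1 : ℕ) : ℝ) ^ 4) := fun n ↦ by
    rw [integral_pow_three_mul_exp_neg_mul_Ioi (by positivity)]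
    push_cast; rfl
  have hζ : HasSum (fun n : ℕ ↦ 6 * (1 / ((n + 1 : ℕ) : ℝ) ^ 4)) (π ^ 4 / 15) := by
    have := ((hasSum_nat_add_iff' 1).2 hasSum_zeta_four).mul_left 6
    rwa [Finset.sum_range_one, show 6 * (π ^ 4 / 90 - 1 / ((0 : ℕ) : ℝ) ^ 4) = π ^ 4 / 15 by
      norm_num; ring] at this
  have hint : ∀ n : ℕ, MeasureTheory.Integrable (fun x : ℝ ↦ x ^ 3 * rexp (-((n + 1) * x)))
      (MeasureTheory.volume.restrict (Set.Ioi 0)) := fun n ↦ by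
    refine MeasureTheory.Integrable.of_integral_ne_zero ?_
    rw [hI]
    positivity
  have hnorm : ∀ n : ℕ, ∫ x in Set.Ioi (0:ℝ), ‖x ^ 3 * rexp (-((n + 1) * x))‖ =
      6 * (1 / ((n + 1 : ℕ) : ℝ) ^ 4) := fun n ↦ by
    rw [← hI]
    refine MeasureTheory.setIntegral_congr_fun measurableSet_Ioi fun x hx ↦ ?_
    have : (0:ℝ) < x := hx
    exact Real.norm_of_nonneg (by positivity)
  have h := MeasureTheory.hasSum_integral_of_summable_integral_norm hint
    (by simpa only [hnorm] using hζ.summable)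
  simp only [hI] at h
  rw [← h.unique hζ]
  refine MeasureTheory.setIntegral_congr_fun measurableSet_Ioi fun x hx ↦ ?_
  exact ((hasSum_exp_neg_natCast_succ_mul hx).mul_left (x ^ 3)).tsum_eq.symm

theorem cos_eq_one_sub_two_mul_sin_half_sq (θ : ℝ) : cos θ = 1 - 2 * sin (θ / 2) ^ 2 := by
  have h := cos_two_mul' (θ / 2)
  rw [mul_div_cancel₀ θ two_ne_zero] at h
  linear_combination h + cos_sq_add_sin_sq (θ / 2)

theorem one_sub_circleMap_one_eq (θ : ℝ) : 1 - circleMap 0 1 θ =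
    (2 * sin (θ / 2) : ℝ) *
      (Complex.cos ((θ - π) / 2 : ℝ) + Complex.sin ((θ - π) / 2 : ℝ) * Complex.I) := by
  have hc : cos ((θ - π) / 2) = sin (θ / 2) := by
    rw [sub_div, cos_sub_pi_div_two]
  have hs : sin ((θ - π) / 2) = -cos (θ / 2) := by
    rw [sub_div, sin_sub_pi_div_two]
  have h1 := cos_eq_one_sub_two_mul_sin_half_sq θ
  have h2 : sin θ = 2 * sin (θ / 2) * cos (θ / 2) := by
    rw [← sin_two_mul]; ring_nf
  rw [← Complex.ofReal_cos, ← Complex.ofReal_sin, hc, hs, circleMap, Complex.exp_mul_I,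
    ← Complex.ofReal_cos, ← Complex.ofReal_sin, h1, h2]
  push_cast
  ring

theorem sin_half_pos {θ : ℝ} (h0 : 0 < θ) (h1 : θ < 2 * π) : 0 < sin (θ / 2) :=
  sin_pos_of_pos_of_lt_pi (by linarith) (by linarith)

theorem norm_one_sub_circleMap_one {θ : ℝ} (h0 : 0 < θ) (h1 : θ < 2 * π) :
    ‖1 - circleMap 0 1 θ‖ = 2 * sin (θ / 2) := by
  rw [one_sub_circleMap_one_eq, norm_mul, Complex.norm_cos_add_sin_mul_I, mul_one,
    Complex.norm_real, Real.norm_of_nonneg (by linarith [sin_half_pos h0 h1])]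

theorem arg_one_sub_circleMap_one {θ : ℝ} (h0 : 0 < θ) (h1 : θ < 2 * π) :
    (1 - circleMap 0 1 θ).arg = (θ - π) / 2 := by
  rw [one_sub_circleMap_one_eq, Complex.arg_mul_cos_add_sin_mul_I
    (by linarith [sin_half_pos h0 h1]) ⟨by linarith, by linarith⟩]

theorem abs_sin_half_le_norm_one_sub_circleMap {r θ : ℝ} (hr : 1 / 2 ≤ r) :
    |sin (θ / 2)| ≤ ‖1 - circleMap 0 r θ‖ := by
  have h1 := cos_eq_one_sub_two_mul_sin_half_sq θ
  have h : ‖1 - circleMap 0 r θ‖ ^ 2 = (1 - r) ^ 2 + 4 * r * sin (θ / 2) ^ 2 := by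
    rw [← Complex.normSq_eq_norm_sq, Complex.normSq_apply]
    have hre : (1 - circleMap 0 r θ).re = 1 - r * cos θ := by
      simp [circleMap, Complex.exp_ofReal_mul_I_re]
    have him : (1 - circleMap 0 r θ).im = - (r * sin θ) := by
      simp [circleMap, Complex.exp_ofReal_mul_I_im]
    rw [hre, him]
    linear_combination r ^ 2 * sin_sq_add_cos_sq θ - 2 * r * h1
  refine abs_le_of_sq_le_sq' ?_ (norm_nonneg _) |> abs_le.2
  rw [h]
  nlinarith [sq_nonneg (1 - r), sq_nonneg (sin (θ / 2))]

theorem abs_log_norm_one_sub_circleMap_le {r θ : ℝ} (hr : 1 / 2 ≤ r) (hr1 : r < 1)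
    (h0 : 0 < θ) (h1 : θ < 2 * π) :
    |log ‖1 - circleMap 0 r θ‖| ≤ 1 + |log (sin (θ / 2))| := by
  have hs := sin_half_pos h0 h1
  have hlow := abs_sin_half_le_norm_one_sub_circleMap (θ := θ) hr
  rw [abs_of_pos hs] at hlow
  have hup : ‖1 - circleMap 0 r θ‖ ≤ 2 := by
    refine (norm_sub_le _ _).trans ?_
    simp [abs_of_pos (show 0 < r by linarith)]
    linarith
  have h2 := log_le_log hs hlow
  have h3 := log_le_log (hs.trans_le hlow) hup
  have h4 := log_two_lt_d9
  rw [abs_le]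
  constructor
  · linarith [neg_abs_le (log (sin (θ / 2)))]
  · linarith [abs_nonneg (log (sin (θ / 2)))]

theorem one_add_abs_log_pow_four_le {x : ℝ} (hx : 0 < x) (hx1 : x ≤ 1) :
    (1 + |log x|) ^ 4 ≤ 9 ^ 4 * x ^ (-(1 / 2) : ℝ) := by
  have h := abs_log_mul_self_rpow_lt x (1 / 8) hx hx1 (by norm_num)
  have hp : 0 < x ^ (1 / 8 : ℝ) := rpow_pos_of_pos hx _
  have hp1 : x ^ (1 / 8 : ℝ) ≤ 1 := rpow_le_one hx.le hx1 (by norm_num)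
  rw [abs_mul, abs_of_pos hp] at h
  have h9 : (1 + |log x|) * x ^ (1 / 8 : ℝ) ≤ 9 := by
    rw [add_mul, one_mul]
    norm_num at h ⊢
    linarith
  have h4 := pow_le_pow_left₀ (by positivity) h9 4
  have he : (x ^ (1 / 8 : ℝ)) ^ 4 = x ^ (1 / 2 : ℝ) := by
    rw [← rpow_natCast, ← rpow_mul hx.le]; norm_num
  rw [mul_pow, he] at h4
  rw [rpow_neg hx.le, ← div_eq_mul_inv, le_div_iff₀ (rpow_pos_of_pos hx _)]
  exact h4

theorem intervalIntegrable_one_add_abs_log_sin_half :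
    IntervalIntegrable (fun θ ↦ (1 + |log (sin (θ / 2))|) ^ 4) MeasureTheory.volume 0 (2 * π) := by
  have hπ := pi_pos
  have hmeas : Measurable fun θ ↦ (1 + |log (sin (θ / 2))|) ^ 4 := by fun_prop
  have hhalf : IntervalIntegrable (fun θ ↦ (1 + |log (sin (θ / 2))|) ^ 4)
      MeasureTheory.volume 0 π := by
    have hg : IntervalIntegrable (fun θ : ℝ ↦ 9 ^ 4 * (π ^ (1 / 2 : ℝ) * θ ^ (-(1 / 2) : ℝ)))
        MeasureTheory.volume 0 π :=
      ((intervalIntegral.intervalIntegrable_rpow' (by norm_num)).const_mul _).const_mul _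
    refine hg.mono_fun' hmeas.aestronglyMeasurable ?_
    rw [Set.uIoc_of_le hπ.le]
    refine (MeasureTheory.ae_restrict_iff' measurableSet_Ioc).2 (Filter.Eventually.of_forall fun θ hθ ↦ ?_)
    have hx : 0 < θ / π := div_pos hθ.1 hπ
    have hx1 : θ / π ≤ 1 := (div_le_one hπ).2 hθ.2
    have hs : θ / π ≤ sin (θ / 2) := by
      have := mul_le_sin (x := θ / 2) (by linarith [hθ.1]) (by linarith [hθ.2])
      calc θ / π = 2 / π * (θ / 2) := by field_simp
        _ ≤ _ := this
    have hl := log_le_log hx hs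
    have hle : |log (sin (θ / 2))| ≤ |log (θ / π)| := by
      rw [abs_of_nonpos (log_nonpos (hx.trans_le hs).le (sin_le_one _)),
        abs_of_nonpos (log_nonpos hx.le hx1)]
      linarith
    beta_reduce
    rw [norm_of_nonneg (by positivity)]
    calc (1 + |log (sin (θ / 2))|) ^ 4 ≤ (1 + |log (θ / π)|) ^ 4 := by gcongr
      _ ≤ _ := one_add_abs_log_pow_four_le hx hx1
      _ = _ := by
        rw [div_rpow hθ.1.le hπ.le, rpow_neg hπ.le, div_inv_eq_mul, mul_comm (π ^ (1 / 2 : ℝ))]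
  refine hhalf.trans ?_
  have := (hhalf.comp_sub_left (2 * π)).symm
  simp only [sub_zero, show 2 * π - π = π by ring] at this
  refine this.congr fun θ _ ↦ ?_
  rw [show (2 * π - θ) / 2 = π - θ / 2 by ring, sin_pi_sub]

theorem re_pow_three_mul_conj_log (z : ℂ) :
    (Complex.log z ^ 3 * (starRingEnd ℂ) (Complex.log z)).re = log ‖z‖ ^ 4 - z.arg ^ 4 := by
  simp only [pow_succ, pow_zero, one_mul, Complex.mul_re, Complex.mul_im, Complex.conj_re,
    Complex.conj_im, Complex.log_re, Complex.log_im]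
  ring

/-- The radial integral of `log (1 - t) ^ 3 / t` after the substitution `t = 1 - exp (-x)`. -/
theorem integral_dslope_log_one_sub_pow_three {X : ℝ} (hX : 0 ≤ X) :
    ∫ t in (0:ℝ)..1 - rexp (-X), dslope (fun z ↦ Complex.log (1 - z) ^ 3) 0 (t : ℂ) =
      (-∫ x in (0:ℝ)..X, x ^ 3 * (rexp (-x) / (1 - rexp (-x))) : ℝ) := by
  have hf := differentiableOn_log_one_sub_pow 3
  have hd := ((Complex.differentiableOn_dslope (Metric.ball_mem_nhds 0 one_pos)).2 hf).continuousOn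
  have hsub := intervalIntegral.integral_deriv_smul_comp' (a := 0) (b := X)
    (f := fun x ↦ 1 - rexp (-x)) (f' := fun x ↦ rexp (-x))
    (g := fun t : ℝ ↦ dslope (fun z ↦ Complex.log (1 - z) ^ 3) 0 (t : ℂ))
    (fun x _ ↦ by simpa using (hasDerivAt_neg x).exp.const_sub 1) (by fun_prop)
    (hd.comp Complex.continuous_ofReal.continuousOn (by
      rintro _ ⟨x, hx, rfl⟩
      rw [Set.uIcc_of_le hX] at hx
      have h1 : rexp (-x) ≤ 1 := by simpa using hx.1
      rw [mem_ball_zero_iff, Complex.norm_real, Real.norm_of_nonneg (by linarith)]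
      linarith [exp_pos (-x)]))
  simp only [neg_zero, Real.exp_zero, sub_self] at hsub
  rw [← hsub, ← intervalIntegral.integral_neg, ← intervalIntegral.integral_ofReal]
  refine intervalIntegral.integral_congr_ae (Filter.Eventually.of_forall fun x hx ↦ ?_)
  rw [Set.uIoc_of_le hX] at hx
  have h1 : rexp (-x) < 1 := by simpa using hx.1
  have hne : ((1 - rexp (-x) : ℝ) : ℂ) ≠ 0 := by
    exact_mod_cast (sub_pos.2 h1).ne'
  have hlog : Complex.log (1 - ((1 - rexp (-x) : ℝ) : ℂ)) = ((-x : ℝ) : ℂ) := by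
    rw [show (1 : ℂ) - ((1 - rexp (-x) : ℝ) : ℂ) = (rexp (-x) : ℝ) by push_cast; ring,
      ← Complex.ofReal_log (exp_pos _).le, Real.log_exp]
  rw [Function.comp_apply, dslope_of_ne _ hne, slope_def_field, hlog, Complex.real_smul]
  simp only [sub_zero, Complex.log_one]
  push_cast
  ring

theorem integral_log_norm_pow_four_sub_arg_pow_four {r : ℝ} (hr : 0 < r) (hr1 : r < 1) :
    ∫ θ in (0:ℝ)..2 * π,
        (log ‖1 - circleMap 0 r θ‖ ^ 4 - (1 - circleMap 0 r θ).arg ^ 4) =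
      2 * π * ∫ x in (0:ℝ)..-log (1 - r ^ 2), x ^ 3 * (rexp (-x) / (1 - rexp (-x))) := by
  have hr2 : 0 < 1 - r ^ 2 := by nlinarith
  have h := integral_mul_conj_log_one_sub (differentiableOn_log_one_sub_pow 3) (by simp) hr hr1
  have hX := integral_dslope_log_one_sub_pow_three (X := -log (1 - r ^ 2))
    (neg_nonneg.2 (log_nonpos hr2.le (by nlinarith)))
  rw [neg_neg, exp_log hr2, sub_sub_cancel] at hX
  rw [hX] at h
  have hcont : Continuous fun θ ↦ Complex.log (1 - circleMap 0 r θ) :=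
    (continuous_const.sub (continuous_circleMap 0 r)).clog fun θ ↦
      one_sub_mem_slitPlane (by simpa [abs_of_pos hr] using hr1)
  have hint : IntervalIntegrable (fun θ ↦ Complex.log (1 - circleMap 0 r θ) ^ 3 *
      (starRingEnd ℂ) (Complex.log (1 - circleMap 0 r θ))) MeasureTheory.volume 0 (2 * π) :=
    ((hcont.pow 3).mul (Complex.continuous_conj.comp hcont)).intervalIntegrable _ _
  have hre := intervalIntegral.intervalIntegral_re hint
  simp only [RCLike.re_to_complex, re_pow_three_mul_conj_log] at hre
  rw [hre, h, ← Complex.ofReal_ofNat, ← Complex.ofReal_mul, ← Complex.ofReal_mul,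
    ← Complex.ofReal_neg, Complex.ofReal_re]
  ring

open Filter Topology in
theorem tendsto_integral_log_norm_pow_four_sub_arg_pow_four :
    Tendsto (fun r : ℝ ↦ ∫ θ in (0:ℝ)..2 * π,
        (log ‖1 - circleMap 0 r θ‖ ^ 4 - (1 - circleMap 0 r θ).arg ^ 4)) (𝓝[<] 1)
      (𝓝 (∫ θ in (0:ℝ)..2 * π, (log (2 * sin (θ / 2)) ^ 4 - ((θ - π) / 2) ^ 4))) := by
  have hrange : ∀ᶠ r : ℝ in 𝓝[<] 1, r ∈ Set.Ioo (1 / 2) 1 :=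
    Ioo_mem_nhdsLT (by norm_num)
  have hne : ∀ᵐ θ : ℝ, θ ≠ 2 * π := by
    simp [MeasureTheory.ae_iff]
  refine intervalIntegral.tendsto_integral_filter_of_dominated_convergence
    (fun θ ↦ (1 + |log (sin (θ / 2))|) ^ 4 + π ^ 4) ?_ ?_
    (intervalIntegrable_one_add_abs_log_sin_half.add intervalIntegrable_const) ?_
  · refine Eventually.of_forall fun r ↦ Measurable.aestronglyMeasurable ?_
    have := (continuous_circleMap 0 r).measurable
    fun_prop
  · filter_upwards [hrange] with r hr
    filter_upwards [hne] with θ hθ hmem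
    rw [Set.uIoc_of_le two_pi_pos.le] at hmem
    have h1 := abs_log_norm_one_sub_circleMap_le hr.1.le hr.2 hmem.1 (hmem.2.lt_of_ne hθ)
    have h2 := Complex.abs_arg_le_pi (1 - circleMap 0 r θ)
    refine (norm_sub_le _ _).trans (add_le_add ?_ ?_)
    · rw [norm_pow]
      exact pow_le_pow_left₀ (norm_nonneg _) h1 4
    · rw [norm_pow]
      exact pow_le_pow_left₀ (norm_nonneg _) h2 4
  · filter_upwards [hne] with θ hθ hmem
    rw [Set.uIoc_of_le two_pi_pos.le] at hmem
    have hlt := hmem.2.lt_of_ne hθ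
    have hs := sin_half_pos hmem.1 hlt
    rw [← norm_one_sub_circleMap_one hmem.1 hlt, ← arg_one_sub_circleMap_one hmem.1 hlt]
    have hc : Tendsto (fun r : ℝ ↦ 1 - circleMap 0 r θ) (𝓝[<] 1) (𝓝 (1 - circleMap 0 1 θ)) := by
      have : Continuous fun r : ℝ ↦ 1 - circleMap 0 r θ := by
        unfold circleMap; fun_prop
      exact (this.tendsto 1).mono_left nhdsWithin_le_nhds
    have hslit : 1 - circleMap 0 1 θ ∈ Complex.slitPlane := by
      rw [Complex.mem_slitPlane_iff_arg, arg_one_sub_circleMap_one hmem.1 hlt,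
        ← norm_pos_iff, norm_one_sub_circleMap_one hmem.1 hlt]
      exact ⟨by linarith [pi_pos], by positivity⟩
    exact ((hc.norm.log (norm_ne_zero_iff.2 (Complex.slitPlane_ne_zero hslit))).pow 4).sub
      (((Complex.continuousAt_arg hslit).tendsto.comp hc).pow 4)

open Filter Topology in
theorem integral_log_two_mul_sin_half_pow_four_sub :
    ∫ θ in (0:ℝ)..2 * π, (log (2 * sin (θ / 2)) ^ 4 - ((θ - π) / 2) ^ 4) =
      2 * π * (π ^ 4 / 15) := by
  refine tendsto_nhds_unique tendsto_integral_log_norm_pow_four_sub_arg_pow_four ?_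
  have hrange : ∀ᶠ r : ℝ in 𝓝[<] 1, r ∈ Set.Ioo 0 1 := Ioo_mem_nhdsLT one_pos
  refine Tendsto.congr' (hrange.mono fun r hr ↦
    (integral_log_norm_pow_four_sub_arg_pow_four hr.1 hr.2).symm) ?_
  rw [← integral_bose_einstein_three]
  refine (MeasureTheory.intervalIntegral_tendsto_integral_Ioi 0 ?_ ?_).const_mul _
  · refine MeasureTheory.Integrable.of_integral_ne_zero ?_
    rw [integral_bose_einstein_three]
    positivity
  · refine tendsto_neg_atBot_atTop.comp (tendsto_log_nhdsGT_zero.comp ?_)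
    refine tendsto_nhdsWithin_iff.2 ⟨?_, hrange.mono fun r hr ↦ ?_⟩
    · have : Continuous fun r : ℝ ↦ 1 - r ^ 2 := by fun_prop
      simpa using (this.tendsto 1).mono_left nhdsWithin_le_nhds
    · have := hr.1
      have := hr.2
      show 0 < 1 - r ^ 2
      nlinarith

theorem intervalIntegrable_log_two_mul_sin_half_pow_four :
    IntervalIntegrable (fun θ ↦ log (2 * sin (θ / 2)) ^ 4) MeasureTheory.volume 0 (2 * π) := by
  refine intervalIntegrable_one_add_abs_log_sin_half.mono_fun'
    (Measurable.aestronglyMeasurable (by fun_prop)) ?_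
  rw [Set.uIoc_of_le two_pi_pos.le]
  refine (MeasureTheory.ae_restrict_iff' measurableSet_Ioc).2 (Filter.Eventually.of_forall
    fun θ hθ ↦ ?_)
  beta_reduce
  rw [norm_pow]
  refine pow_le_pow_left₀ (norm_nonneg _) ?_ 4
  rcases eq_or_ne (sin (θ / 2)) 0 with h | h
  · simp [h]
  rw [log_mul two_ne_zero h]
  refine (norm_add_le _ _).trans (add_le_add_left ?_ _)
  rw [Real.norm_of_nonneg (log_nonneg one_le_two)]
  linarith [log_two_lt_d9]

theorem integral_zero_two_pi_log_two_mul_sin_half_pow_four :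
    ∫ θ in (0:ℝ)..2 * π, log (2 * sin (θ / 2)) ^ 4 =
      2 * ∫ θ in (0:ℝ)..π, log (2 * sin (θ / 2)) ^ 4 := by
  have hπ := pi_pos
  have hI := intervalIntegrable_log_two_mul_sin_half_pow_four
  have hmem : π ∈ Set.uIcc 0 (2 * π) := by
    rw [Set.uIcc_of_le two_pi_pos.le]
    exact ⟨hπ.le, by linarith⟩
  rw [← intervalIntegral.integral_add_adjacent_intervals
    (hI.mono_set (Set.uIcc_subset_uIcc_left hmem)) (hI.mono_set (Set.uIcc_subset_uIcc_right hmem)),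
    two_mul (∫ θ in (0:ℝ)..π, _)]
  congr 1
  have h := intervalIntegral.integral_comp_sub_left (a := 0) (b := π)
    (fun θ ↦ log (2 * sin (θ / 2)) ^ 4) (2 * π)
  rw [sub_zero, show 2 * π - π = π by ring] at h
  rw [← h]
  refine intervalIntegral.integral_congr fun θ _ ↦ ?_
  rw [show (2 * π - θ) / 2 = π - θ / 2 by ring, sin_pi_sub]

theorem integral_sub_pi_div_two_pow_four :
    ∫ θ in (0:ℝ)..2 * π, ((θ - π) / 2) ^ 4 = π ^ 5 / 40 := by
  rw [intervalIntegral.integral_comp_sub_right (fun u : ℝ ↦ (u / 2) ^ 4) π,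
    intervalIntegral.integral_comp_div (fun u : ℝ ↦ u ^ 4) two_ne_zero, integral_pow, smul_eq_mul]
  ring

theorem ls5_pi : ∫ θ in (0:ℝ)..π, (Real.log (2 * Real.sin (θ/2)))^4 = 19/240 * π^5 := by
  have h := integral_log_two_mul_sin_half_pow_four_sub
  rw [intervalIntegral.integral_sub intervalIntegrable_log_two_mul_sin_half_pow_four
    (Continuous.intervalIntegrable (by fun_prop) _ _), integral_sub_pi_div_two_pow_four,
    integral_zero_two_pi_log_two_mul_sin_half_pow_four] at h
  linarith
end

section
/- The integral $\int_0^{\pi/3} \log^2(2\sin(\theta/2))\,d\theta = \frac{7}{108}\pi^3$. -/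
open Real

open Set Filter Topology

lemma hasDerivAt_im_comp {F : ℂ → ℂ} {γ : ℝ → ℂ} {F' γ' : ℂ} {x : ℝ}
    (hF : HasDerivAt F F' (γ x)) (hγ : HasDerivAt γ γ' x) :
    HasDerivAt (fun t => (F (γ t)).im) (F' * γ').im x := by
  have h := Complex.imCLM.hasFDerivAt.comp_hasDerivAt x (hF.scomp x hγ)
  simpa [Function.comp_def, mul_comm] using h

lemma polar_mem_ball {r φ : ℝ} (hr : 0 < r) (h : r < 4 * cos φ) :
    (r : ℂ) * Complex.exp (-φ * Complex.I) ∈ Metric.ball (2 : ℂ) 2 := by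
  rw [mem_ball_iff_norm, ← abs_of_pos (two_pos : (0 : ℝ) < 2), ← abs_of_nonneg (norm_nonneg _),
    ← sq_lt_sq, Complex.sq_norm, Complex.normSq_apply]
  have e : Complex.exp (-φ * Complex.I) = (cos φ : ℂ) - sin φ * Complex.I := by
    rw [Complex.exp_mul_I]
    simp
    ring
  simp only [e, Complex.sub_re, Complex.sub_im, Complex.re_ofReal_mul, Complex.im_ofReal_mul,
    Complex.ofReal_re, Complex.ofReal_im, Complex.I_re, Complex.I_im, Complex.re_ofNat,
    Complex.im_ofNat]
  nlinarith [sin_sq_add_cos_sq φ, mul_lt_mul_of_pos_left h hr]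

lemma log_polar {r φ : ℝ} (hr : 0 < r) (h : |φ| < π) :
    Complex.log (r * Complex.exp (-φ * Complex.I)) = Real.log r - φ * Complex.I := by
  rw [abs_lt] at h
  rw [Complex.log_ofReal_mul hr (Complex.exp_ne_zero _), Complex.log_exp]
  · ring
  · simpa using h.2
  · simpa using by linarith

lemma one_sub_exp_mul_I (θ : ℝ) :
    1 - Complex.exp (θ * Complex.I) =
      (2 * sin (θ / 2) : ℝ) * Complex.exp (-((π - θ) / 2 : ℝ) * Complex.I) := by
  have e1 : Complex.exp (-((π - θ) / 2 : ℝ) * Complex.I)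
      = -Complex.I * Complex.exp ((θ / 2 : ℝ) * Complex.I) := by
    have : (-((π - θ) / 2 : ℝ) * Complex.I : ℂ)
        = -(π / 2 * Complex.I) + (θ / 2 : ℝ) * Complex.I := by
      push_cast
      ring
    rw [this, Complex.exp_add, Complex.exp_neg, Complex.exp_pi_div_two_mul_I, Complex.inv_I]
  have e2 : Complex.exp (θ * Complex.I) = Complex.exp ((θ / 2 : ℝ) * Complex.I) ^ 2 := by
    rw [← Complex.exp_nat_mul]
    push_cast
    ring_nf
  have e3 : Complex.exp ((θ / 2 : ℝ) * Complex.I)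
      = (cos (θ / 2) : ℂ) + sin (θ / 2) * Complex.I := by
    rw [Complex.exp_mul_I, Complex.ofReal_cos, Complex.ofReal_sin]
  have e4 : (sin (θ / 2) : ℂ) ^ 2 + (cos (θ / 2) : ℂ) ^ 2 = 1 := by
    exact_mod_cast sin_sq_add_cos_sq (θ / 2)
  rw [e1, e2, e3, Complex.ofReal_mul, Complex.ofReal_ofNat]
  linear_combination (-1 : ℂ) * e4 +
    ((sin (θ / 2) : ℂ) ^ 2) * Complex.I_sq

/-- The holomorphic extension to `w = 1` of `log² w / (1 - w)`. -/
noncomputable def logSqDivOneSub (w : ℂ) : ℂ := -Complex.log w * dslope Complex.log 1 w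

lemma logSqDivOneSub_of_ne {w : ℂ} (hw : w ≠ 1) :
    logSqDivOneSub w = Complex.log w ^ 2 / (1 - w) := by
  have h1 : w - 1 ≠ 0 := sub_ne_zero.2 hw
  have h2 : 1 - w ≠ 0 := sub_ne_zero.2 hw.symm
  rw [logSqDivOneSub, dslope_of_ne _ hw, slope_def_field, Complex.log_one]
  field_simp
  ring

lemma logSqDivOneSub_one : logSqDivOneSub 1 = 0 := by
  simp [logSqDivOneSub]

lemma exists_primitive_logSqDivOneSub :
    ∃ F : ℂ → ℂ, ∀ w ∈ Metric.ball (2 : ℂ) 2, HasDerivAt F (logSqDivOneSub w) w := by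
  have hlog : DifferentiableOn ℂ Complex.log (Metric.ball (2 : ℂ) 2) := by
    refine DifferentiableOn.clog differentiableOn_id fun w hw => Or.inl ?_
    have := (abs_lt.1 ((Complex.abs_re_le_norm (w - 2)).trans_lt (mem_ball_iff_norm.1 hw))).1
    simp at this
    simpa using this
  have hmem : Metric.ball (2 : ℂ) 2 ∈ 𝓝 (1 : ℂ) :=
    Metric.isOpen_ball.mem_nhds (by rw [mem_ball_iff_norm]; norm_num)
  exact (hlog.neg.mul ((Complex.differentiableOn_dslope hmem).2 hlog)).isExactOn_ball

lemma hasDerivAt_primitive_circle {F : ℂ → ℂ}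
    (hF : ∀ w ∈ Metric.ball (2 : ℂ) 2, HasDerivAt F (logSqDivOneSub w) w)
    {r φ : ℝ} (hr : 0 < r) (h : r < 4 * cos φ) :
    HasDerivAt (fun t : ℝ => F (r * Complex.exp (-t * Complex.I)))
      (logSqDivOneSub (r * Complex.exp (-φ * Complex.I)) *
        (r * (Complex.exp (-φ * Complex.I) * -Complex.I))) φ := by
  have hγ : HasDerivAt (fun t : ℝ => (r : ℂ) * Complex.exp (-t * Complex.I))
      (r * (Complex.exp (-φ * Complex.I) * -Complex.I)) φ := by
    have : HasDerivAt (fun t : ℝ => -(t : ℂ) * Complex.I) (-Complex.I) φ := by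
      simpa using (Complex.ofRealCLM.hasDerivAt (x := φ)).neg.mul_const Complex.I
    exact this.cexp.const_mul _
  have := (hF _ (polar_mem_ball hr h)).scomp φ hγ
  simpa [Function.comp_def, mul_comm] using this

lemma primitive_im_real {F : ℂ → ℂ}
    (hF : ∀ w ∈ Metric.ball (2 : ℂ) 2, HasDerivAt F (logSqDivOneSub w) w)
    {x : ℝ} (hx : 0 < x) (hx1 : x ≤ 1) : (F x).im = (F 1).im := by
  have hd : ∀ t ∈ Icc x 1, HasDerivAt (fun t : ℝ => (F t).im) 0 t := by
    intro t ht
    have ht0 : 0 < t := hx.trans_le ht.1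
    have hmem : (t : ℂ) ∈ Metric.ball (2 : ℂ) 2 := by
      simpa using polar_mem_ball (r := t) (φ := 0) ht0 (by simp; linarith [ht.2])
    have := hasDerivAt_im_comp (hF _ hmem) (Complex.ofRealCLM.hasDerivAt (x := t))
    convert! this using 1
    simp only [Complex.ofRealCLM_apply, Complex.ofReal_one, mul_one]
    rcases eq_or_ne t 1 with rfl | h1
    · simp [logSqDivOneSub_one]
    · rw [logSqDivOneSub_of_ne (by exact_mod_cast h1), ← Complex.ofReal_log ht0.le]
      norm_cast
  have := constant_of_has_deriv_right_zero (fun t ht => (hd t ht).continuousAt.continuousWithinAt)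
    (fun t ht => (hd t (Ico_subset_Icc_self ht)).hasDerivWithinAt) 1 (right_mem_Icc.2 hx1)
  simpa using this.symm

lemma primitive_im_unit_circle {F : ℂ → ℂ}
    (hF : ∀ w ∈ Metric.ball (2 : ℂ) 2, HasDerivAt F (logSqDivOneSub w) w) :
    (F (Complex.exp (-(π / 3 : ℝ) * Complex.I))).im = (F 1).im - π ^ 3 / 162 := by
  have hd : ∀ t ∈ Icc 0 (π / 3), HasDerivAt
      (fun t : ℝ => (F ((1 : ℝ) * Complex.exp (-t * Complex.I))).im + t ^ 3 / 6) 0 t := by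
    intro t ht
    have hcos : 1 / 2 ≤ cos t := by
      rw [← cos_pi_div_three]
      exact cos_le_cos_of_nonneg_of_le_pi ht.1 (by linarith [pi_pos]) ht.2
    have h := Complex.imCLM.hasFDerivAt.comp_hasDerivAt t
      (hasDerivAt_primitive_circle hF one_pos (φ := t) (by linarith))
    have h3 : HasDerivAt (fun t : ℝ => t ^ 3 / 6) (t ^ 2 / 2) t := by
      convert! (hasDerivAt_pow 3 t).div_const 6 using 1
      norm_num
      ring
    convert! h.add h3 using 1
    rcases ht.1.eq_or_lt with rfl | h0
    · simp [logSqDivOneSub_one]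
    · have hc1 : cos t < 1 := by
        rw [← cos_zero]
        exact cos_lt_cos_of_nonneg_of_le_pi le_rfl (by linarith [pi_pos, ht.2]) h0
      have e : Complex.exp (-t * Complex.I) = (cos t : ℂ) - sin t * Complex.I := by
        rw [Complex.exp_mul_I]
        simp
        ring
      have hlog := log_polar (r := 1) (φ := t) one_pos
        (by rw [abs_of_pos h0]; linarith [pi_pos, ht.2])
      have hne : ((1 : ℝ) : ℂ) * Complex.exp (-t * Complex.I) ≠ 1 := by
        intro h
        rw [e] at h
        have := congrArg Complex.re h
        simp [-Complex.ofReal_cos, -Complex.ofReal_sin] at this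
        linarith
      rw [logSqDivOneSub_of_ne hne, hlog, e]
      have hden : (1 : ℂ) - ((1 : ℝ) : ℂ) * ((cos t : ℂ) - sin t * Complex.I) ≠ 0 := by
        rw [← e]
        exact sub_ne_zero.2 hne.symm
      have key : ((Real.log 1 : ℝ) - (t : ℂ) * Complex.I) ^ 2 /
            (1 - ((1 : ℝ) : ℂ) * ((cos t : ℂ) - sin t * Complex.I)) *
            (((1 : ℝ) : ℂ) * (((cos t : ℂ) - sin t * Complex.I) * -Complex.I))
          = ((t ^ 2 * sin t / (2 * (1 - cos t)) : ℝ) : ℂ) - ((t ^ 2 / 2 : ℝ) : ℂ) * Complex.I := by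
        have hc : (1 : ℂ) - cos t ≠ 0 := by
          exact_mod_cast (sub_pos.2 hc1).ne'
        have hsc : (sin t : ℂ) ^ 2 + (cos t : ℂ) ^ 2 = 1 := by
          exact_mod_cast sin_sq_add_cos_sq t
        simp only [Real.log_one, Complex.ofReal_zero, Complex.ofReal_one, one_mul, zero_sub,
          Complex.ofReal_div, Complex.ofReal_mul, Complex.ofReal_pow, Complex.ofReal_sub,
          Complex.ofReal_ofNat] at hden ⊢
        generalize (cos t : ℂ) = c at *
        generalize (sin t : ℂ) = s at *
        rw [div_mul_eq_mul_div, div_eq_iff hden]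
        field_simp
        linear_combination -Complex.I * t ^ 2 * hsc - ((1 - c) * s * t ^ 2 +
          2 * t ^ 2 * (c - Complex.I * s) * (1 - c) * Complex.I) * Complex.I_sq
      rw [key]
      simp [-Complex.ofReal_div, -Complex.ofReal_mul, -Complex.ofReal_pow, Complex.ofReal_im]
  have := constant_of_has_deriv_right_zero (fun t ht => (hd t ht).continuousAt.continuousWithinAt)
    (fun t ht => (hd t (Ico_subset_Icc_self ht)).hasDerivWithinAt) (π / 3)
    (right_mem_Icc.2 (by positivity))
  simp only [Complex.ofReal_one, one_mul, Complex.ofReal_zero, neg_zero, zero_mul,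
    Complex.exp_zero] at this
  linear_combination this

lemma norm_primitive_circle_sub_le {F : ℂ → ℂ}
    (hF : ∀ w ∈ Metric.ball (2 : ℂ) 2, HasDerivAt F (logSqDivOneSub w) w)
    {r φ : ℝ} (hr : 0 < r) (hr1 : r ≤ 1 / 2) (hφ : 0 ≤ φ)
    (hφ2 : φ ≤ π / 2) (h : r < 4 * cos φ) :
    ‖F (r * Complex.exp (-φ * Complex.I)) - F r‖ ≤ 4 * (r * (|Real.log r| + 2) ^ 2) := by
  have hcos : ∀ t ∈ Icc 0 φ, r < 4 * cos t := fun t ht => by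
    linarith [cos_le_cos_of_nonneg_of_le_pi ht.1 (by linarith [pi_pos]) ht.2]
  have := norm_image_sub_le_of_norm_deriv_le_segment' (C := 2 * (r * (|Real.log r| + 2) ^ 2))
    (fun t ht => (hasDerivAt_primitive_circle hF hr (hcos t ht)).hasDerivWithinAt) ?_
    φ (right_mem_Icc.2 hφ)
  · simp only [Complex.ofReal_zero, neg_zero, zero_mul, Complex.exp_zero, mul_one, sub_zero] at this
    refine this.trans ?_
    have : 0 ≤ r * (|Real.log r| + 2) ^ 2 := by positivity
    nlinarith [pi_le_four]
  · intro t ht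
    have hexp : ‖Complex.exp (-t * Complex.I)‖ = 1 := by
      simpa using Complex.norm_exp_ofReal_mul_I (-t)
    have hnorm : ‖(r : ℂ) * Complex.exp (-t * Complex.I)‖ = r := by
      rw [norm_mul, hexp, Complex.norm_of_nonneg hr.le, mul_one]
    have hne : (r : ℂ) * Complex.exp (-t * Complex.I) ≠ 1 := by
      intro h
      rw [h, norm_one] at hnorm
      linarith
    have hden : 1 / 2 ≤ ‖1 - (r : ℂ) * Complex.exp (-t * Complex.I)‖ := by
      have := norm_sub_norm_le 1 ((r : ℂ) * Complex.exp (-t * Complex.I))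
      rw [hnorm, norm_one] at this
      linarith
    have hlog : ‖Complex.log (r * Complex.exp (-t * Complex.I))‖ ≤ |Real.log r| + 2 := by
      rw [log_polar hr (by rw [abs_of_nonneg ht.1]; linarith [pi_pos, ht.2])]
      refine (norm_sub_le _ _).trans ?_
      rw [norm_mul, Complex.norm_I, Complex.norm_real, Complex.norm_of_nonneg ht.1, mul_one,
        Real.norm_eq_abs]
      linarith [pi_le_four, ht.2]
    rw [logSqDivOneSub_of_ne hne, norm_mul, norm_div, norm_pow, norm_mul, norm_mul, hexp, norm_neg,
      Complex.norm_I, Complex.norm_of_nonneg hr.le, mul_one, mul_one]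
    calc _ ≤ (|Real.log r| + 2) ^ 2 / (1 / 2) * r := by gcongr
      _ = _ := by ring

lemma tendsto_primitive_im_zero {F : ℂ → ℂ}
    (hF : ∀ w ∈ Metric.ball (2 : ℂ) 2, HasDerivAt F (logSqDivOneSub w) w) :
    Tendsto (fun θ : ℝ => (F (1 - Complex.exp (θ * Complex.I))).im) (𝓝[>] 0) (𝓝 (F 1).im) := by
  have hb : Tendsto (fun r : ℝ => 4 * (r * (|Real.log r| + 2) ^ 2)) (𝓝[>] 0) (𝓝 0) := by
    have h1 := (tendsto_log_mul_rpow_nhdsGT_zero (r := 1 / 2) (by norm_num)).abs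
    have h2 : Tendsto (fun r : ℝ => r ^ (1 / 2 : ℝ)) (𝓝[>] 0) (𝓝 0) := by
      have := (continuousAt_rpow_const 0 (1 / 2) (Or.inr (by norm_num))).tendsto
      rw [zero_rpow (by norm_num)] at this
      exact this.mono_left nhdsWithin_le_nhds
    have h3 := ((h1.add (h2.const_mul 2)).pow 2).const_mul 4
    simp only [abs_zero, mul_zero, add_zero, ne_eq, OfNat.ofNat_ne_zero, not_false_eq_true,
      zero_pow] at h3
    refine h3.congr' ?_
    filter_upwards [self_mem_nhdsWithin] with r hr
    have hr : 0 < r := hr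
    have hs : r ^ (1 / 2 : ℝ) * r ^ (1 / 2 : ℝ) = r := by
      rw [← rpow_add hr]
      norm_num
    rw [abs_mul, abs_of_pos (rpow_pos_of_pos hr _)]
    linear_combination 4 * (|Real.log r| + 2) ^ 2 * hs
  have hr : Tendsto (fun θ : ℝ => 2 * sin (θ / 2)) (𝓝[>] 0) (𝓝[>] 0) := by
    refine tendsto_nhdsWithin_iff.2 ⟨?_, ?_⟩
    · have : ContinuousAt (fun θ : ℝ => 2 * sin (θ / 2)) 0 := by fun_prop
      have := this.tendsto
      simp only [zero_div, sin_zero, mul_zero] at this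
      exact this.mono_left nhdsWithin_le_nhds
    · filter_upwards [Ioo_mem_nhdsGT pi_pos] with θ hθ
      exact mul_pos two_pos (sin_pos_of_pos_of_lt_pi (by linarith [hθ.1]) (by linarith [hθ.1, hθ.2]))
  have hsmall : ∀ᶠ r : ℝ in 𝓝[>] 0, r ∈ Ioo (0 : ℝ) (1 / 2) := Ioo_mem_nhdsGT (by norm_num)
  rw [tendsto_iff_norm_sub_tendsto_zero]
  refine squeeze_zero' (Eventually.of_forall fun _ => norm_nonneg _) ?_ (hb.comp hr)
  filter_upwards [hr.eventually hsmall, Ioo_mem_nhdsGT pi_pos] with θ hθ hθ'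
  have hcos : cos ((π - θ) / 2) = sin (θ / 2) := by
    rw [← cos_pi_div_two_sub]
    ring_nf
  rw [← primitive_im_real hF hθ.1 (by linarith [hθ.2]), ← Complex.sub_im, one_sub_exp_mul_I]
  refine (Complex.abs_im_le_norm _).trans
    (norm_primitive_circle_sub_le hF hθ.1 hθ.2.le ?_ ?_ ?_)
  · linarith [hθ'.2]
  · linarith [hθ'.1]
  · rw [hcos]
    linarith [hθ.1]

lemma hasDerivAt_primitive_im {F : ℂ → ℂ}
    (hF : ∀ w ∈ Metric.ball (2 : ℂ) 2, HasDerivAt F (logSqDivOneSub w) w)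
    {θ : ℝ} (h0 : 0 < θ) (h1 : θ < π) :
    HasDerivAt (fun θ : ℝ => (F (1 - Complex.exp (θ * Complex.I))).im)
      ((π - θ) ^ 2 / 4 - Real.log (2 * sin (θ / 2)) ^ 2) θ := by
  have hs : 0 < sin (θ / 2) := sin_pos_of_pos_of_lt_pi (by linarith) (by linarith)
  have hcos : cos ((π - θ) / 2) = sin (θ / 2) := by
    rw [← cos_pi_div_two_sub]
    ring_nf
  have hmem : 1 - Complex.exp (θ * Complex.I) ∈ Metric.ball (2 : ℂ) 2 := by
    rw [one_sub_exp_mul_I]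
    exact polar_mem_ball (by positivity) (by rw [hcos]; linarith)
  have hγ : HasDerivAt (fun t : ℝ => 1 - Complex.exp (t * Complex.I))
      (-(Complex.exp (θ * Complex.I) * Complex.I)) θ := by
    have : HasDerivAt (fun t : ℝ => (t : ℂ) * Complex.I) Complex.I θ := by
      simpa using (Complex.ofRealCLM.hasDerivAt (x := θ)).mul_const Complex.I
    exact this.cexp.const_sub 1
  convert! hasDerivAt_im_comp
    (γ := fun t : ℝ => 1 - Complex.exp (t * Complex.I)) (hF _ hmem) hγ using 1
  have hne : 1 - Complex.exp (θ * Complex.I) ≠ 1 := by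
    simp [Complex.exp_ne_zero]
  have hlog : Complex.log (1 - Complex.exp (θ * Complex.I))
      = (Real.log (2 * sin (θ / 2)) : ℝ) - ((π - θ) / 2 : ℝ) * Complex.I := by
    rw [one_sub_exp_mul_I, log_polar (by positivity) (by rw [abs_lt]; constructor <;> linarith)]
  rw [logSqDivOneSub_of_ne hne, hlog, sub_sub_cancel]
  have := Complex.exp_ne_zero (θ * Complex.I)
  generalize Real.log (2 * sin (θ / 2)) = L
  have e : ((L : ℂ) - ((π - θ) / 2 : ℝ) * Complex.I) ^ 2 / Complex.exp (θ * Complex.I) *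
      -(Complex.exp (θ * Complex.I) * Complex.I)
      = -(((L : ℂ) - ((π - θ) / 2 : ℝ) * Complex.I) ^ 2 * Complex.I) := by
    field_simp
  rw [e]
  generalize hx : (π - θ) / 2 = x
  have hx' : π - θ = 2 * x := by linarith
  rw [hx']
  simp [pow_two]
  ring

theorem ls3_pi_over_3 :
    ∫ θ in (0:ℝ)..(π/3), (Real.log (2 * Real.sin (θ/2)))^2 = 7/108 * π^3 := by
  obtain ⟨F, hF⟩ := exists_primitive_logSqDivOneSub
  let H : ℝ → ℝ := fun θ => -(π - θ) ^ 3 / 12 - (F (1 - Complex.exp (θ * Complex.I))).im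
  have hd : ∀ θ : ℝ, 0 < θ → θ < π → HasDerivAt H (Real.log (2 * sin (θ / 2)) ^ 2) θ := by
    intro θ h0 h1
    have h3 : HasDerivAt (fun θ : ℝ => -(π - θ) ^ 3 / 12) ((π - θ) ^ 2 / 4) θ := by
      convert! ((((hasDerivAt_id θ).const_sub π).pow 3).neg.div_const 12) using 1
      simp
      ring
    convert! h3.sub (hasDerivAt_primitive_im hF h0 h1) using 1
    ring
  have h0 : Tendsto H (𝓝[>] 0) (𝓝 (-π ^ 3 / 12 - (F 1).im)) := by
    refine Tendsto.sub ?_ (tendsto_primitive_im_zero hF)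
    have : ContinuousAt (fun θ : ℝ => -(π - θ) ^ 3 / 12) 0 := by fun_prop
    have := this.tendsto
    simp only [sub_zero] at this
    exact this.mono_left nhdsWithin_le_nhds
  have hπ := pi_pos
  have hcont : ContinuousOn (Function.update H 0 (-π ^ 3 / 12 - (F 1).im)) (Icc 0 (π / 3)) := by
    intro θ hθ
    rcases hθ.1.eq_or_lt with rfl | hθ0
    · rw [continuousWithinAt_update_same]
      refine h0.mono_left (nhdsWithin_mono _ ?_)
      exact fun x hx => lt_of_le_of_ne hx.1.1 (Ne.symm hx.2)
    · rw [continuousWithinAt_update_of_ne hθ0.ne']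
      exact (hd θ hθ0 (by linarith [hθ.2])).continuousAt.continuousWithinAt
  have hderiv : ∀ θ ∈ Ioo 0 (π / 3), HasDerivAt (Function.update H 0 (-π ^ 3 / 12 - (F 1).im))
      (Real.log (2 * sin (θ / 2)) ^ 2) θ := by
    intro θ hθ
    refine (hd θ hθ.1 (by linarith [hθ.2])).congr_of_eventuallyEq ?_
    filter_upwards [Ioi_mem_nhds hθ.1] with t ht
    exact Function.update_of_ne (ne_of_gt ht) _ _
  have hle : 0 ≤ π / 3 := by positivity
  have hint : IntervalIntegrable (fun θ => Real.log (2 * sin (θ / 2)) ^ 2)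
      MeasureTheory.volume 0 (π / 3) :=
    (intervalIntegrable_iff_integrableOn_Ioc_of_le hle).2
      (intervalIntegral.integrableOn_deriv_of_nonneg hcont hderiv fun θ _ => sq_nonneg _)
  rw [intervalIntegral.integral_eq_sub_of_hasDerivAt_of_le hle hcont hderiv hint,
    Function.update_self, Function.update_of_ne (by positivity)]
  have hend : 1 - Complex.exp ((π / 3 : ℝ) * Complex.I)
      = Complex.exp (-(π / 3 : ℝ) * Complex.I) := by
    rw [one_sub_exp_mul_I, show π / 3 / 2 = π / 6 by ring, sin_pi_div_six,
      show (π - π / 3) / 2 = π / 3 by ring]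
    norm_num
  simp only [H, hend, primitive_im_unit_circle hF]
  ring
end

section
/- $\sum_{k=0}^\infty \frac{2^{-4k}}{(2k+1)^2}\binom{2k}{k} = \mathrm{Cl}_2(\pi/3)$, where $\mathrm{Cl}_2(\theta) = \sum_{n=1}^\infty \sin(n\theta)/n^2$ is the Clausen function. -/
open Real

/-- Termwise differentiation, on the unit disc, of a power series in the exponents `d * n + 1`. -/
theorem hasDerivAt_tsum_pow_mul_succ_div {𝕜 : Type*} [RCLike 𝕜] {a : ℕ → 𝕜}
    (ha : ∀ n, ‖a n‖ ≤ 1) {d : ℕ} (hd : 0 < d) {z : 𝕜} (hz : ‖z‖ < 1) :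
    HasDerivAt (fun w ↦ ∑' n : ℕ, a n * w ^ (d * n + 1) / (d * n + 1))
      (∑' n : ℕ, a n * z ^ (d * n)) z := by
  obtain ⟨r, hzr, hr⟩ := exists_between hz
  have hr0 : 0 ≤ r := (norm_nonneg z).trans hzr.le
  have hball : z ∈ Metric.ball (0 : 𝕜) r := by simpa using hzr
  refine hasDerivAt_tsum_of_isPreconnected (u := fun n ↦ r ^ n) (y₀ := 0)
    (g := fun n w ↦ a n * w ^ (d * n + 1) / (d * n + 1)) (g' := fun n w ↦ a n * w ^ (d * n))
    (summable_geometric_of_lt_one hr0 hr) Metric.isOpen_ball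
    (convex_ball (0 : 𝕜) r).isPreconnected (fun n y _ ↦ ?_) (fun n y hy ↦ ?_)
    (Metric.mem_ball_self ((norm_nonneg z).trans_lt hzr)) ?_ hball
  · have hne : ((d * n : ℕ) : 𝕜) + 1 ≠ 0 := Nat.cast_add_one_ne_zero _
    push_cast at hne
    convert! ((hasDerivAt_pow (d * n + 1) y).const_mul (a n)).div_const ((d : 𝕜) * n + 1) using 1
    push_cast
    field_simp
  · have hy' : ‖y‖ ≤ r := by simpa using (mem_ball_zero_iff.mp hy).le
    calc ‖a n * y ^ (d * n)‖ ≤ 1 * ‖y‖ ^ (d * n) := by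
          rw [norm_mul, norm_pow]
          gcongr
          exact ha n
      _ ≤ r ^ (d * n) := by rw [one_mul]; gcongr
      _ ≤ r ^ n := pow_le_pow_of_le_one hr0 hr.le (Nat.le_mul_of_pos_left n hd)
  · simp

theorem multichoose_one_half (n : ℕ) :
    Ring.multichoose (1 / 2 : ℝ) n = n.centralBinom / 4 ^ n := by
  induction n with
  | zero => simp
  | succ n ih =>
    have h1 := Ring.factorial_nsmul_multichoose_eq_ascPochhammer (1 / 2 : ℝ) n
    have h2 := Ring.factorial_nsmul_multichoose_eq_ascPochhammer (1 / 2 : ℝ) (n + 1)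
    rw [ascPochhammer_succ_right, Polynomial.smeval_mul, ← h1, ih] at h2
    have hf : (n.factorial : ℝ) ≠ 0 := mod_cast n.factorial_ne_zero
    have hn : (n : ℝ) + 1 ≠ 0 := n.cast_add_one_ne_zero
    have hc : ((n : ℝ) + 1) * (n + 1).centralBinom = 2 * (2 * n + 1) * n.centralBinom :=
      mod_cast n.succ_mul_centralBinom_succ
    simp only [Polynomial.smeval_add, Polynomial.smeval_X, Polynomial.smeval_natCast,
      Nat.factorial_succ, nsmul_eq_mul, pow_one, pow_zero, mul_one] at h2
    push_cast at h2
    have h3 : ((n : ℝ) + 1) * Ring.multichoose (1 / 2 : ℝ) (n + 1)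
        = n.centralBinom / 4 ^ n * (1 / 2 + n) := by
      apply mul_left_cancel₀ hf
      linear_combination h2
    apply mul_left_cancel₀ hn
    rw [h3, ← mul_div_assoc, hc, pow_succ]
    field_simp
    ring

theorem hasSum_centralBinom_div_four_pow_mul_pow {x : ℝ} (hx : |x| < 1) :
    HasSum (fun n : ℕ ↦ n.centralBinom / 4 ^ n * x ^ n) (1 / √(1 - x)) := by
  have h := (Real.one_div_one_sub_rpow_hasFPowerSeriesOnBall_zero (1 / 2)).hasSum (y := x)
    (by simpa [enorm_eq_nnnorm, ← NNReal.coe_lt_coe] using hx)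
  simpa [-one_div, ← Ring.multichoose_eq, multichoose_one_half, sqrt_eq_rpow, mul_comm,
    FormalMultilinearSeries.ofScalars_apply_eq] using h

theorem norm_centralBinom_div_four_pow_le_one (n : ℕ) :
    ‖(n.centralBinom / 4 ^ n : ℝ)‖ ≤ 1 := by
  rw [norm_of_nonneg (by positivity)]
  exact div_le_one_of_le₀ (mod_cast n.centralBinom_le_four_pow) (by positivity)

theorem arcsin_eq_tsum {x : ℝ} (hx : |x| < 1) :
    arcsin x = ∑' n : ℕ, (n.centralBinom / 4 ^ n : ℝ) * x ^ (2 * n + 1) / (2 * n + 1) := by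
  have hd : ∀ y ∈ Metric.ball (0 : ℝ) 1, HasDerivAt (fun y ↦ arcsin y -
      ∑' n : ℕ, (n.centralBinom / 4 ^ n : ℝ) * y ^ (2 * n + 1) / (2 * n + 1)) 0 y := by
    intro y hy
    have hy : |y| < 1 := by simpa using hy
    have h1 := hasDerivAt_arcsin (neg_lt_of_abs_lt hy).ne' (lt_of_abs_lt hy).ne
    have h2 := hasDerivAt_tsum_pow_mul_succ_div norm_centralBinom_div_four_pow_le_one two_pos hy
    have h3 := hasSum_centralBinom_div_four_pow_mul_pow (x := y ^ 2)
      (by rwa [abs_pow, sq_lt_one_iff₀ (abs_nonneg y)])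
    simp only [pow_mul] at h2
    rw [h3.tsum_eq] at h2
    simpa [pow_mul] using! h1.sub h2
  have h := Metric.isOpen_ball.is_const_of_deriv_eq_zero
    (convex_ball (0 : ℝ) 1).isPreconnected
    (fun y hy ↦ (hd y hy).differentiableAt.differentiableWithinAt) (fun y hy ↦ (hd y hy).deriv)
    (x := x) (y := 0) (by simpa using hx) (by simp)
  simpa [sub_eq_zero] using h

/-- The primitive of `t * cot t`, written as a central binomial series in `sin t`. -/
theorem hasDerivAt_tsum_centralBinom_sin {t : ℝ} (ht0 : 0 < t) (ht : t < π / 2) :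
    HasDerivAt (fun t ↦ ∑' n : ℕ,
      (n.centralBinom / 4 ^ n / (2 * n + 1) : ℝ) * sin t ^ (2 * n + 1) / (2 * n + 1))
      (t * cos t / sin t) t := by
  have hs0 : 0 < sin t := sin_pos_of_pos_of_lt_pi ht0 (by linarith)
  have hs1 : |sin t| < 1 := by
    rw [abs_of_pos hs0, ← sin_pi_div_two]
    exact sin_lt_sin_of_lt_of_le_pi_div_two (by linarith) le_rfl ht
  have hb (n : ℕ) : ‖(n.centralBinom / 4 ^ n / (2 * n + 1) : ℝ)‖ ≤ 1 := by
    rw [norm_div]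
    refine div_le_one_of_le₀ ((norm_centralBinom_div_four_pow_le_one n).trans ?_) (norm_nonneg _)
    rw [norm_of_nonneg (by positivity)]
    linarith [n.cast_nonneg (α := ℝ)]
  have h := (hasDerivAt_tsum_pow_mul_succ_div hb two_pos hs1).comp t (hasDerivAt_sin t)
  have hval : ∑' n : ℕ, (n.centralBinom / 4 ^ n / (2 * n + 1) : ℝ) * sin t ^ (2 * n)
      = t / sin t := by
    rw [eq_div_iff hs0.ne', ← tsum_mul_right]
    nth_rw 3 [← arcsin_sin (x := t) (by linarith) ht.le]
    rw [arcsin_eq_tsum hs1]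
    congr! 2 with n
    ring
  rw [hval] at h
  convert! h using 1
  ring

theorem exp_neg_two_mul_I (t : ℂ) :
    Complex.exp (-(2 * t * Complex.I)) = Complex.exp (-(t * Complex.I)) ^ 2 := by
  rw [← Complex.exp_nat_mul]
  push_cast
  ring_nf

theorem one_sub_exp_neg_two_mul_I (t : ℂ) :
    1 - Complex.exp (-(2 * t * Complex.I))
      = 2 * Complex.I * Complex.sin t * Complex.exp (-(t * Complex.I)) := by
  have h' : Complex.exp (t * Complex.I) * Complex.exp (-(t * Complex.I)) = 1 := by
    rw [← Complex.exp_add, add_neg_cancel, Complex.exp_zero]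
  rw [exp_neg_two_mul_I, Complex.sin, neg_mul]
  linear_combination -h' + (Complex.exp (t * Complex.I) * Complex.exp (-(t * Complex.I))
    - Complex.exp (-(t * Complex.I)) ^ 2) * Complex.I_sq

theorem norm_one_sub_exp_neg_two_mul_I (t : ℝ) :
    ‖1 - Complex.exp (-(2 * t * Complex.I))‖ = 2 * |sin t| := by
  rw [one_sub_exp_neg_two_mul_I, ← Complex.ofReal_sin, ← neg_mul, ← Complex.ofReal_neg]
  simp only [norm_mul, Complex.norm_exp_ofReal_mul_I, Complex.norm_I, Complex.norm_real]
  simp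

/-- On the circle `|1 - z| = 1`, the dilogarithm has the imaginary part `∫ 2 * t * cot t`. -/
theorem hasDerivAt_im_dilog_one_sub_exp {t : ℝ} (ht0 : 0 < t) (ht : t < π / 6) :
    HasDerivAt (fun t : ℝ ↦ (∑' n : ℕ,
      (1 - Complex.exp (-(2 * t * Complex.I))) ^ (n + 1) / ((n : ℂ) + 1) ^ 2).im)
      (2 * (t * cos t / sin t)) t := by
  have hs0 : 0 < sin t := sin_pos_of_pos_of_lt_pi ht0 (by linarith)
  have hs0' : Complex.sin t ≠ 0 := mod_cast hs0.ne'
  have hz : ‖1 - Complex.exp (-(2 * t * Complex.I))‖ < 1 := by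
    have := sin_lt_sin_of_lt_of_le_pi_div_two (by linarith) (by linarith [pi_pos]) ht
    rw [sin_pi_div_six] at this
    rw [norm_one_sub_exp_neg_two_mul_I, abs_of_pos hs0]
    linarith
  have hb (n : ℕ) : ‖1 / ((n : ℂ) + 1)‖ ≤ 1 := by
    rw [norm_div, norm_one, show (n : ℂ) + 1 = ((n + 1 : ℕ) : ℂ) by simp, Complex.norm_natCast]
    exact div_le_one_of_le₀ (by simp) (by positivity)
  have hval : (∑' n : ℕ, 1 / ((n : ℂ) + 1) * (1 - Complex.exp (-(2 * t * Complex.I))) ^ (1 * n))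
      * (1 - Complex.exp (-(2 * t * Complex.I))) = 2 * t * Complex.I := by
    have h := (Complex.hasSum_taylorSeries_neg_log' hz).tsum_eq
    rw [sub_sub_cancel, Complex.log_exp (by simp; linarith) (by simp; linarith), neg_neg] at h
    rw [← tsum_mul_right]
    refine (tsum_congr fun n ↦ ?_).trans h
    ring
  have hlin : HasDerivAt (fun w : ℂ ↦ -(2 * w * Complex.I)) (-(2 * Complex.I)) t := by
    simpa using! (((hasDerivAt_id (t : ℂ)).const_mul 2).mul_const Complex.I).neg
  have h := (((hasDerivAt_tsum_pow_mul_succ_div hb one_pos hz).comp (t : ℂ)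
    (hlin.cexp.const_sub 1)).comp_ofReal)
  have him := Complex.imCLM.hasFDerivAt.comp_hasDerivAt t h
  convert! him using 1
  · ext w
    simp only [Function.comp_apply, Complex.imCLM_apply]
    congr! 3 with n
    push_cast
    field_simp
    simp
  · rw [Complex.imCLM_apply]
    set A := ∑' n : ℕ, 1 / ((n : ℂ) + 1) * (1 - Complex.exp (-(2 * t * Complex.I))) ^ (1 * n)
    have hA : A * -(Complex.exp (-(2 * t * Complex.I)) * -(2 * Complex.I))
        = ((2 * t : ℝ) : ℂ) + ((2 * (t * cos t / sin t) : ℝ) : ℂ) * Complex.I := by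
      rw [one_sub_exp_neg_two_mul_I] at hval
      have hexp : Complex.exp (-(t * Complex.I))
          = Complex.cos t - Complex.sin t * Complex.I := by
        rw [← neg_mul, Complex.exp_mul_I, Complex.cos_neg, Complex.sin_neg]
        ring
      apply mul_right_cancel₀ hs0'
      push_cast
      rw [exp_neg_two_mul_I]
      linear_combination Complex.exp (-(t * Complex.I)) * hval + 2 * t * Complex.I * hexp
        - 2 * t * Complex.sin t * Complex.I_sq
        - 2 * t * Complex.I * div_mul_cancel₀ (Complex.cos t) hs0'
    rw [hA]
    simp [-Complex.ofReal_mul, -Complex.ofReal_div]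

theorem central_binomial_sum_clausen :
    ∑' k : ℕ, (2:ℝ)^(-(4:ℤ)*k) / (2*k+1)^2 * (Nat.centralBinom k)
      = ∑' n : ℕ, Real.sin ((n+1) * (π/3)) / (n+1)^2 := by
  have hπ := pi_pos
  let F : ℝ → ℝ := fun t ↦ ∑' n : ℕ,
    (n.centralBinom / 4 ^ n / (2 * n + 1) : ℝ) * sin t ^ (2 * n + 1) / (2 * n + 1)
  let z : ℝ → ℂ := fun t ↦ 1 - Complex.exp (-(2 * t * Complex.I))
  let G : ℝ → ℂ := fun t ↦ ∑' n : ℕ, z t ^ (n + 1) / ((n : ℂ) + 1) ^ 2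
  have hsin : ∀ t ∈ Set.Icc 0 (π / 6), 0 ≤ sin t ∧ sin t ≤ 1 / 2 := fun t ht ↦
    ⟨sin_nonneg_of_nonneg_of_le_pi ht.1 (by linarith [ht.2]), by
      rw [← sin_pi_div_six]
      exact sin_le_sin_of_le_of_le_pi_div_two (by linarith [ht.1]) (by linarith) ht.2⟩
  have hz : ∀ t ∈ Set.Icc 0 (π / 6), ‖z t‖ ≤ 1 := by
    intro t ht
    obtain ⟨h0, h1⟩ := hsin t ht
    rw [norm_one_sub_exp_neg_two_mul_I, abs_of_nonneg h0]
    linarith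
  have hsum : Summable fun n : ℕ ↦ 1 / ((n : ℝ) + 1) ^ 2 := by
    simpa using (summable_nat_add_iff 1).mpr (summable_one_div_nat_pow.mpr one_lt_two)
  have hbound : ∀ n : ℕ, ∀ t ∈ Set.Icc 0 (π / 6),
      ‖z t ^ (n + 1) / ((n : ℂ) + 1) ^ 2‖ ≤ 1 / ((n : ℝ) + 1) ^ 2 := by
    intro n t ht
    have hn : ‖(n : ℂ) + 1‖ = n + 1 := by
      rw [← Nat.cast_add_one, Complex.norm_natCast, Nat.cast_add_one]
    rw [norm_div, norm_pow, norm_pow, hn]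
    gcongr
    exact pow_le_one₀ (norm_nonneg _) (hz t ht)
  have hG : ContinuousOn G (Set.Icc 0 (π / 6)) :=
    continuousOn_tsum (fun n ↦ by fun_prop) hsum hbound
  have hF : ContinuousOn F (Set.Icc 0 (π / 6)) := by
    refine continuousOn_tsum (u := fun n : ℕ ↦ (1 / 2 : ℝ) ^ n) (fun n ↦ by fun_prop)
      (summable_geometric_of_lt_one (by norm_num) (by norm_num)) (fun n t ht ↦ ?_)
    obtain ⟨h0, h1⟩ := hsin t ht
    have hc := norm_centralBinom_div_four_pow_le_one n
    rw [norm_of_nonneg (by positivity)] at hc ⊢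
    have hn : (1 : ℝ) ≤ 2 * n + 1 := by linarith [n.cast_nonneg (α := ℝ)]
    calc (n.centralBinom / 4 ^ n / (2 * n + 1) : ℝ) * sin t ^ (2 * n + 1) / (2 * n + 1)
        ≤ 1 / 1 * (1 / 2) ^ (2 * n + 1) / 1 := by gcongr
      _ = (1 / 2) ^ (2 * n + 1) := by ring
      _ ≤ (1 / 2) ^ n := pow_le_pow_of_le_one (by norm_num) (by norm_num) (by lia)
  have hend : (G (π / 6)).im = 2 * F (π / 6) := by
    obtain ⟨c, -, hc⟩ := exists_hasDerivAt_eq_slope (fun t ↦ (G t).im - 2 * F t) (fun _ ↦ 0)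
      (show 0 < π / 6 by positivity) ((Complex.continuous_im.comp_continuousOn hG).sub
        (hF.const_mul 2)) fun t ht ↦ by
          simpa using! (hasDerivAt_im_dilog_one_sub_exp ht.1 ht.2).sub
            ((hasDerivAt_tsum_centralBinom_sin ht.1 (by linarith [ht.2])).const_mul 2)
    have h0 : (G 0).im - 2 * F 0 = 0 := by simp [G, F, z]
    rw [h0, sub_zero, eq_comm, div_eq_zero_iff] at hc
    exact sub_eq_zero.mp (hc.resolve_right (by linarith))
  have hzend : z (π / 6) = Complex.exp ((π / 3 : ℝ) * Complex.I) := by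
    have h : -(2 * ((π / 6 : ℝ) : ℂ) * Complex.I) = ((-(π / 3) : ℝ) : ℂ) * Complex.I := by
      push_cast
      ring
    simp only [z]
    rw [h, Complex.exp_mul_I, Complex.exp_mul_I, ← Complex.ofReal_cos, ← Complex.ofReal_sin,
      ← Complex.ofReal_cos, ← Complex.ofReal_sin, cos_neg, sin_neg, cos_pi_div_three]
    push_cast
    ring
  have hleft : 2 * F (π / 6)
      = ∑' k : ℕ, (2:ℝ)^(-(4:ℤ)*k) / (2*k+1)^2 * (Nat.centralBinom k) := by
    simp only [F]
    rw [← tsum_mul_left, sin_pi_div_six]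
    congr! 2 with k
    rw [zpow_mul, zpow_natCast, pow_succ, pow_mul, show (2 : ℝ) ^ (-4 : ℤ) = 1 / 4 * (1 / 2) ^ 2 by
      norm_num, mul_pow]
    simp only [one_div_pow]
    field_simp
  have hright : (G (π / 6)).im = ∑' n : ℕ, Real.sin ((n+1) * (π/3)) / (n+1)^2 := by
    have hsG : Summable fun n : ℕ ↦ z (π / 6) ^ (n + 1) / ((n : ℂ) + 1) ^ 2 :=
      .of_norm_bounded hsum fun n ↦ hbound n _ ⟨by positivity, le_rfl⟩
    rw [Complex.im_tsum hsG]
    congr! 2 with n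
    have h1 : z (π / 6) ^ (n + 1) = Complex.exp (((n + 1) * (π / 3) : ℝ) * Complex.I) := by
      rw [hzend, ← Complex.exp_nat_mul]
      push_cast
      ring_nf
    have h2 : ((n : ℂ) + 1) ^ 2 = (((n : ℝ) + 1) ^ 2 : ℝ) := by push_cast; rfl
    rw [h1, h2, Complex.div_ofReal_im, Complex.exp_ofReal_mul_I_im]
  rw [← hleft, ← hend, hright]
end

section
/- $\int_{1/6}^{5/6}\log^2(2\sin(\pi t))\,dt = \frac{\pi^2}{54}$. -/
open Real

/-- The function `log (1 - z) ^ 2 / z` has a holomorphic primitive on the half-plane `re z < 1`. -/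
lemma exists_primitive_log_one_sub_sq_div :
    ∃ F g : ℂ → ℂ, (∀ z, z.re < 1 → HasDerivAt F (g z) z) ∧
      (∀ z, g z * z = Complex.log (1 - z) ^ 2) ∧ g 0 = 0 := by
  set s : Set ℂ := {z | z.re < 1} with hs
  have hopen : IsOpen s := isOpen_lt Complex.continuous_re continuous_const
  have hconv : Convex ℝ s := convex_halfSpace_re_lt 1
  set L : ℂ → ℂ := fun z => Complex.log (1 - z) with hL
  have hLdiff : DifferentiableOn ℂ L s := by
    intro z hz
    refine DifferentiableAt.differentiableWithinAt ?_
    refine DifferentiableAt.clog (by fun_prop) (Or.inl ?_)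
    simpa [hs] using hz
  have hL0 : L 0 = 0 := by simp [hL]
  have hslope : DifferentiableOn ℂ (dslope L 0) s :=
    (Complex.differentiableOn_dslope (hopen.mem_nhds (by simp [hs]))).2 hLdiff
  obtain ⟨F, hF⟩ := hconv.exists_forall_hasDerivWithinAt (hLdiff.mul hslope)
  refine ⟨F, fun z => L z * dslope L 0 z, fun z hz => (hF z hz).hasDerivAt (hopen.mem_nhds hz),
    fun z => ?_, by simp [hL0]⟩
  have h := sub_smul_dslope L 0 z
  simp only [sub_zero, smul_eq_mul, hL0] at h
  rw [mul_assoc, mul_comm (dslope L 0 z), h, sq]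

lemma Complex.log_one_sub_exp_two_pi_mul_I {t : ℝ} (h0 : 0 < t) (h1 : t < 1) :
    Complex.log (1 - Complex.exp (2 * π * t * Complex.I)) =
      Real.log (2 * Real.sin (π * t)) + π * (t - 1 / 2) * Complex.I := by
  have hπ := Real.pi_pos
  have hsin : 0 < Real.sin (π * t) :=
    Real.sin_pos_of_pos_of_lt_pi (by positivity) (by nlinarith)
  have key : 1 - Complex.exp (2 * π * t * Complex.I) =
      ((2 * Real.sin (π * t) : ℝ) : ℂ) * Complex.exp (π * (t - 1 / 2) * Complex.I) := by
    have hexp : Complex.exp (π * (t - 1 / 2) * Complex.I) =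
        Complex.exp (π * t * Complex.I) * (-Complex.I) := by
      rw [← Complex.exp_neg_pi_div_two_mul_I, ← Complex.exp_add]
      congr 1
      ring
    have hne := Complex.exp_ne_zero (π * t * Complex.I)
    have hsq : Complex.exp (2 * π * t * Complex.I) = Complex.exp (π * t * Complex.I) ^ 2 := by
      rw [← Complex.exp_nat_mul]
      congr 1
      push_cast
      ring
    rw [hexp, hsq]
    push_cast
    rw [Complex.sin, neg_mul, Complex.exp_neg]
    field_simp
    linear_combination (1 - Complex.exp (π * t * Complex.I) ^ 2) * Complex.I_sq
  have him : (π * (t - 1 / 2) * Complex.I : ℂ).im = π * (t - 1 / 2) := by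
    have : (π * (t - 1 / 2) * Complex.I : ℂ) = ((π * (t - 1 / 2) : ℝ) : ℂ) * Complex.I := by
      push_cast; ring
    rw [this, Complex.im_ofReal_mul, Complex.I_im, mul_one]
  rw [key, Complex.log_ofReal_mul (by positivity) (Complex.exp_ne_zero _),
    Complex.log_exp (by rw [him]; nlinarith) (by rw [him]; nlinarith)]

/-- Integrating `log (1 - z) ^ 2 / z` along the arc of the unit circle from `exp (π i / 3)` to
`exp (-π i / 3)` through `-1`. -/
lemma integral_log_sq_sub_eq_im_primitive {F g : ℂ → ℂ}
    (hF : ∀ z : ℂ, z.re < 1 → HasDerivAt F (g z) z)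
    (hg : ∀ z, g z * z = Complex.log (1 - z) ^ 2) :
    ∫ t in (1/6:ℝ)..(5/6), ((Real.log (2 * Real.sin (π * t)))^2 - π ^ 2 * (t - 1 / 2) ^ 2) =
      ((F (Complex.exp (2 * π * (5 / 6 : ℝ) * Complex.I))).im -
        (F (Complex.exp (2 * π * (1 / 6 : ℝ) * Complex.I))).im) / (2 * π) := by
  have hπ := Real.pi_pos
  have hbounds : ∀ t ∈ Set.uIcc (1/6:ℝ) (5/6), 0 < t ∧ t < 1 := by
    intro t ht
    rw [Set.uIcc_of_le (by norm_num)] at ht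
    exact ⟨by linarith [ht.1], by linarith [ht.2]⟩
  have hsin : ∀ t ∈ Set.uIcc (1/6:ℝ) (5/6), 0 < Real.sin (π * t) := by
    intro t ht
    obtain ⟨h0, h1⟩ := hbounds t ht
    exact Real.sin_pos_of_pos_of_lt_pi (by positivity) (by nlinarith)
  have hderiv : ∀ t ∈ Set.uIcc (1/6:ℝ) (5/6),
      HasDerivAt (fun t : ℝ => (F (Complex.exp (2 * π * t * Complex.I))).im / (2 * π))
        ((Real.log (2 * Real.sin (π * t)))^2 - π ^ 2 * (t - 1 / 2) ^ 2) t := by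
    intro t ht
    obtain ⟨h0, h1⟩ := hbounds t ht
    have hcurve : HasDerivAt (fun t : ℝ => Complex.exp (2 * π * t * Complex.I))
        (Complex.exp (2 * π * t * Complex.I) * (2 * π * 1 * Complex.I)) t :=
      (((Complex.ofRealCLM.hasDerivAt (x := t)).const_mul (2 * π : ℂ)).mul_const Complex.I).cexp
    have hre : (Complex.exp (2 * π * t * Complex.I)).re < 1 := by
      have harg : (2 * π * t * Complex.I : ℂ) = ((2 * (π * t) : ℝ) : ℂ) * Complex.I := by
        push_cast
        ring
      rw [harg, Complex.exp_ofReal_mul_I_re, Real.cos_two_mul, Real.cos_sq']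
      nlinarith [hsin t ht]
    have h := (Complex.imCLM.hasFDerivAt.comp_hasDerivAt t
      ((hF _ hre).comp t hcurve)).div_const (2 * π)
    refine h.congr_deriv ?_
    rw [← mul_assoc, hg, Complex.log_one_sub_exp_two_pi_mul_I h0 h1]
    have hsplit : ((Real.log (2 * Real.sin (π * t)) : ℂ) + π * (t - 1 / 2) * Complex.I) ^ 2 *
        (2 * π * 1 * Complex.I) =
        ((2 * π * ((Real.log (2 * Real.sin (π * t)))^2 - π ^ 2 * (t - 1 / 2) ^ 2) : ℝ) : ℂ) *
          Complex.I +
        ((-(4 * π ^ 2 * Real.log (2 * Real.sin (π * t)) * (t - 1 / 2)) : ℝ) : ℂ) := by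
      push_cast
      linear_combination (4 * π ^ 2 * (Real.log (2 * Real.sin (π * t)) : ℂ) * (t - 1 / 2) +
        2 * π ^ 3 * (t - 1 / 2) ^ 2 * Complex.I) * Complex.I_sq
    rw [hsplit, Complex.imCLM_apply, Complex.add_im, Complex.ofReal_im, Complex.im_ofReal_mul,
      Complex.I_im]
    field_simp
    ring
  have hcont : ContinuousOn
      (fun t : ℝ => (Real.log (2 * Real.sin (π * t)))^2 - π ^ 2 * (t - 1 / 2) ^ 2)
      (Set.uIcc (1/6:ℝ) (5/6)) := by
    refine ContinuousOn.sub (ContinuousOn.pow (ContinuousOn.log (by fun_prop) ?_) 2) (by fun_prop)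
    intro t ht
    have := hsin t ht
    positivity
  rw [intervalIntegral.integral_eq_sub_of_hasDerivAt hderiv hcont.intervalIntegrable]
  ring

/-- Integrating `log (1 - z) ^ 2 / z` along the arc `1 - exp (i φ)`, `|φ| ≤ π / 3`. -/
lemma im_primitive_sub_eq {F g : ℂ → ℂ}
    (hF : ∀ z : ℂ, z.re < 1 → HasDerivAt F (g z) z)
    (hg : ∀ z, g z * z = Complex.log (1 - z) ^ 2) (hg0 : g 0 = 0) :
    (F (1 - Complex.exp ((π / 3 : ℝ) * Complex.I))).im -
      (F (1 - Complex.exp ((-(π / 3) : ℝ) * Complex.I))).im = -π ^ 3 / 81 := by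
  have hπ := Real.pi_pos
  have hderiv : ∀ φ ∈ Set.uIcc (-(π / 3)) (π / 3),
      HasDerivAt (fun φ : ℝ => (F (1 - Complex.exp (φ * Complex.I))).im) (-φ ^ 2 / 2) φ := by
    intro φ hφ
    rw [Set.uIcc_of_le (by linarith)] at hφ
    obtain ⟨hφ0, hφ1⟩ := hφ
    have hcurve : HasDerivAt (fun φ : ℝ => 1 - Complex.exp (φ * Complex.I))
        (-(Complex.exp (φ * Complex.I) * (1 * Complex.I))) φ :=
      (((Complex.ofRealCLM.hasDerivAt (x := φ)).mul_const Complex.I).cexp).const_sub 1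
    have hcos : 0 < Real.cos φ := Real.cos_pos_of_mem_Ioo ⟨by linarith, by linarith⟩
    have hre : (1 - Complex.exp (φ * Complex.I)).re < 1 := by
      rw [Complex.sub_re, Complex.exp_ofReal_mul_I_re, Complex.one_re]
      linarith
    have h := Complex.imCLM.hasFDerivAt.comp_hasDerivAt φ ((hF _ hre).comp φ hcurve)
    refine h.congr_deriv ?_
    rw [Complex.imCLM_apply]
    rcases eq_or_ne φ 0 with rfl | hne
    · simp [hg0]
    have hlog : Complex.log (1 - (1 - Complex.exp (φ * Complex.I))) = φ * Complex.I := by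
      rw [sub_sub_cancel, Complex.log_exp] <;> simp <;> linarith
    have hgz := hg (1 - Complex.exp (φ * Complex.I))
    rw [hlog] at hgz
    have hcos1 : Real.cos φ < 1 := by
      refine lt_of_le_of_ne (Real.cos_le_one φ) fun h1 => hne ?_
      exact (Real.cos_eq_one_iff_of_lt_of_lt (by linarith) (by linarith)).1 h1
    set w := g (1 - Complex.exp (φ * Complex.I))
    have hre_eq := congrArg Complex.re hgz
    have him_eq := congrArg Complex.im hgz
    have hsc := Real.sin_sq_add_cos_sq φ
    simp only [Complex.mul_re, Complex.mul_im, Complex.sub_re, Complex.sub_im, Complex.one_re,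
      Complex.one_im, Complex.exp_ofReal_mul_I_re, Complex.exp_ofReal_mul_I_im, sq,
      Complex.ofReal_re, Complex.ofReal_im, Complex.I_re, Complex.I_im] at hre_eq him_eq
    simp only [Complex.mul_re, Complex.mul_im, Complex.neg_re, Complex.neg_im, Complex.one_re,
      Complex.one_im, Complex.exp_ofReal_mul_I_re, Complex.exp_ofReal_mul_I_im,
      Complex.I_re, Complex.I_im]
    have hw : w.re = -φ ^ 2 / 2 := by
      refine mul_right_cancel₀ (sub_ne_zero.2 hcos1.ne') ?_
      linear_combination (1 - Real.cos φ) / 2 * hre_eq - Real.sin φ / 2 * him_eq - w.re / 2 * hsc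
    linear_combination hre_eq - hw
  rw [← intervalIntegral.integral_eq_sub_of_hasDerivAt hderiv
    (Continuous.intervalIntegrable (by fun_prop) _ _)]
  simp only [intervalIntegral.integral_div, intervalIntegral.integral_neg, integral_pow]
  ring

theorem mu2_1xy_star :
    ∫ t in (1/6:ℝ)..(5/6), (Real.log (2 * Real.sin (π * t)))^2 = π^2 / 54 := by
  have hπ := Real.pi_pos
  obtain ⟨F, g, hF, hg, hg0⟩ := exists_primitive_log_one_sub_sq_div
  have hexp : Complex.exp ((π / 3 : ℝ) * Complex.I) = 1 / 2 + √3 / 2 * Complex.I := by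
    rw [Complex.exp_mul_I, ← Complex.ofReal_cos, ← Complex.ofReal_sin, Real.cos_pi_div_three,
      Real.sin_pi_div_three]
    push_cast
    ring
  have hexp_neg : Complex.exp ((-(π / 3) : ℝ) * Complex.I) = 1 / 2 - √3 / 2 * Complex.I := by
    rw [Complex.exp_mul_I, ← Complex.ofReal_cos, ← Complex.ofReal_sin, Real.cos_neg, Real.sin_neg,
      Real.cos_pi_div_three, Real.sin_pi_div_three]
    push_cast
    ring
  have hstart : Complex.exp (2 * π * (1 / 6 : ℝ) * Complex.I) =
      1 - Complex.exp ((-(π / 3) : ℝ) * Complex.I) := by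
    have harg : (2 * π * (1 / 6 : ℝ) * Complex.I : ℂ) = (π / 3 : ℝ) * Complex.I := by
      push_cast
      ring
    rw [harg, hexp, hexp_neg]
    ring
  have hend : Complex.exp (2 * π * (5 / 6 : ℝ) * Complex.I) =
      1 - Complex.exp ((π / 3 : ℝ) * Complex.I) := by
    have harg : (2 * π * (5 / 6 : ℝ) * Complex.I : ℂ) =
        (-(π / 3) : ℝ) * Complex.I + 2 * π * Complex.I := by
      push_cast
      ring
    rw [harg, Complex.exp_add, Complex.exp_two_pi_mul_I, mul_one, hexp, hexp_neg]
    ring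
  have harc := integral_log_sq_sub_eq_im_primitive hF hg
  rw [hstart, hend, im_primitive_sub_eq hF hg hg0] at harc
  have hint : IntervalIntegrable (fun t : ℝ => (Real.log (2 * Real.sin (π * t)))^2)
      MeasureTheory.volume (1/6) (5/6) := by
    refine ContinuousOn.intervalIntegrable
      (ContinuousOn.pow (ContinuousOn.log (by fun_prop) fun t ht => ?_) 2)
    rw [Set.uIcc_of_le (by norm_num)] at ht
    have : 0 < Real.sin (π * t) :=
      Real.sin_pos_of_pos_of_lt_pi (by nlinarith [ht.1]) (by nlinarith [ht.2])
    positivity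
  have hquad : ∫ t in (1/6:ℝ)..(5/6), π ^ 2 * (t - 1 / 2) ^ 2 = 2 * π ^ 2 / 81 := by
    rw [intervalIntegral.integral_const_mul,
      intervalIntegral.integral_comp_sub_right (fun t => t ^ 2), integral_pow]
    ring
  rw [intervalIntegral.integral_sub hint (Continuous.intervalIntegrable (by fun_prop) _ _),
    hquad] at harc
  have hval : -π ^ 3 / 81 / (2 * π) = -π ^ 2 / 162 := by
    field_simp
    norm_num
  linarith
end
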